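/- Let k ≥ 1 be a fixed integer and let K_n, P_n be scalings with K_n ≥ 2 for all sufficiently large n and P_n = Ω(n). Define α_n by K_n²/P_n = (ln n + (k−1)·ln ln n + α_n)/n. If lim_{n→∞} α_n = +∞, then P[G(n,K_n,P_n) is k-connected] → 1 as n → ∞. -/

import Mathlib

open MeasureTheory Filter Asymptotics
open scoped ENNReal

noncomputable section

/-- Key rings: `K`-element subsets of a key pool of size `P`. -/
abbrev KeyRing (P K : ℕ) : Type := {s : Finset (Fin P) // s.card = K}

instance (P K : ℕ) : MeasurableSpace (KeyRing P K) := ⊤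

/-- The uniform probability measure on key rings. -/
def uniformKeyMeasure (P K : ℕ) : Measure (KeyRing P K) :=
  (Fintype.card (KeyRing P K) : ℝ≥0∞)⁻¹ • (Measure.count : Measure (KeyRing P K))

/-- The Bernoulli measure with parameter `p` on `Bool`. -/
def bern (p : ℝ) : Measure Bool :=
  ENNReal.ofReal p • Measure.dirac true + ENNReal.ofReal (1 - p) • Measure.dirac false

/-- Sample space underlying `𝔾_on(n, K, P, p)`: independent key rings for the `n`
nodes together with independent on/off channel states for each pair of nodes. -/
abbrev GonSpace (n K P : ℕ) : Type :=
  (Fin n → KeyRing P K) × (Sym2 (Fin n) → Bool)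

/-- The probability measure of the model `𝔾_on(n, K, P, p)`: the key rings of the
`n` nodes are independent and uniform, and the channels are independent
Bernoulli(`p`) variables, independent of the key rings. -/
def gonMeasure (n K P : ℕ) (p : ℝ) : Measure (GonSpace n K P) :=
  (Measure.pi fun _ : Fin n => uniformKeyMeasure P K).prod
    (Measure.pi fun _ : Sym2 (Fin n) => bern p)

/-- The random graph `𝔾_on`: an edge is present iff the key rings intersect and the
channel between the two nodes is on. -/
def gonGraph {n K P : ℕ} (ω : GonSpace n K P) : SimpleGraph (Fin n) where
  Adj i j := i ≠ j ∧ ((ω.1 i).1 ∩ (ω.1 j).1).Nonempty ∧ ω.2 s(i, j) = true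
  symm := by
    constructor
    rintro i j ⟨h1, h2, h3⟩
    exact ⟨h1.symm, by rwa [Finset.inter_comm], by rwa [Sym2.eq_swap]⟩
  loopless := ⟨fun i h => h.1 rfl⟩

/-- The random key graph `G(n, K, P)`: an edge is present iff the key rings intersect. -/
def rkgGraph {n K P : ℕ} (ω : Fin n → KeyRing P K) : SimpleGraph (Fin n) where
  Adj i j := i ≠ j ∧ ((ω i).1 ∩ (ω j).1).Nonempty
  symm := by
    constructor
    rintro i j ⟨h1, h2⟩
    exact ⟨h1.symm, by rwa [Finset.inter_comm]⟩
  loopless := ⟨fun i h => h.1 rfl⟩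

/-- The probability measure of the random key graph model. -/
def rkgMeasure (n K P : ℕ) : Measure (Fin n → KeyRing P K) :=
  Measure.pi fun _ : Fin n => uniformKeyMeasure P K

/-- Degree of a vertex. -/
def gDeg {V : Type*} (G : SimpleGraph V) (v : V) : ℕ := Nat.card {w // G.Adj v w}

/-- Minimum vertex degree. -/
def minDeg {V : Type*} (G : SimpleGraph V) : ℕ := sInf (Set.range (gDeg G))

/-- A graph is `k`-connected if it remains connected after the removal of any
`k - 1` of its vertices. -/
def KConnected {V : Type*} (G : SimpleGraph V) (k : ℕ) : Prop :=
  ∀ S : Finset V, S.card ≤ k - 1 → (G.induce ((S : Set V)ᶜ)).Connected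

/-- Vertex connectivity: the least number of vertices whose deletion disconnects
the graph. -/
def vertexConn {V : Type*} (G : SimpleGraph V) : ℕ :=
  sInf {m | ∃ S : Finset V, S.card = m ∧ ¬ (G.induce ((S : Set V)ᶜ)).Connected}

/-- `p_s`: the probability that two key rings share at least one key. -/
def psf (K P : ℕ) : ℝ :=
  if 2 * K ≤ P then 1 - (Nat.choose (P - K) K : ℝ) / (Nat.choose P K : ℝ) else 1

/-- `p_e = p · p_s`: the probability of an edge in `𝔾_on`. -/
def pef (K P : ℕ) (p : ℝ) : ℝ := p * psf K P

/-- The event `D_{x,ℓ}` that the node with index `x` has degree exactly `ℓ`. -/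
def degEvent (n K P : ℕ) (x ℓ : ℕ) : Set (GonSpace n K P) :=
  {ω | ∃ hx : x < n, gDeg (gonGraph ω) ⟨x, hx⟩ = ℓ}

/-- The event `E_{xy}` that the edge between the nodes with indices `x`, `y` is present. -/
def edgeEvent (n K P : ℕ) (x y : ℕ) : Set (GonSpace n K P) :=
  {ω | ∃ (hx : x < n) (hy : y < n), (gonGraph ω).Adj ⟨x, hx⟩ ⟨y, hy⟩}

/-- The event that the key rings of nodes `x` and `y` share exactly `u` keys. -/
def interCardEvent (n K P : ℕ) (x y u : ℕ) : Set (GonSpace n K P) :=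
  {ω | ∃ (hx : x < n) (hy : y < n), ((ω.1 ⟨x, hx⟩).1 ∩ (ω.1 ⟨y, hy⟩).1).card = u}

/-- The event `K_{xy}` that the key rings of nodes `x` and `y` share at least one key. -/
def keyShareEvent (n K P : ℕ) (x y : ℕ) : Set (GonSpace n K P) :=
  {ω | ∃ (hx : x < n) (hy : y < n), ((ω.1 ⟨x, hx⟩).1 ∩ (ω.1 ⟨y, hy⟩).1).Nonempty}

/-- `r_n = min(⌊P/K⌋, ⌊n/2⌋)`. -/
def rn (n K P : ℕ) : ℕ := min (P / K) (n / 2)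

/-- The threshold array `J`. -/
def Jarr (n K P : ℕ) (ε lam mu : ℝ) (i : ℕ) : ℕ :=
  if i ≤ rn n K P then max ⌊(1 + ε) * (K : ℝ)⌋₊ ⌊lam * (K : ℝ) * (i : ℝ)⌋₊
  else ⌊mu * (P : ℝ)⌋₊

/-- The event `𝓔(J)`: some set `T` of at least two nodes has a union of key rings of
size at most `J_{|T|}`. -/
def EJ (n K P : ℕ) (ε lam mu : ℝ) : Set (GonSpace n K P) :=
  {ω | ∃ T : Finset (Fin n), 2 ≤ T.card ∧
    (T.biUnion fun i => (ω.1 i).1).card ≤ Jarr n K P ε lam mu T.card}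

/-!
If the graph is not `k`-connected, removing fewer than `k` vertices cuts off a set `A` of at most
`n / 2` vertices, whose outer boundary `∂A` then has fewer than `k` elements. So the failure
probability is at most the sum over all such `A` of the probability that `|∂A| < k`. Given the
union `U` of the key rings of `A`, the other key rings meet `U` independently, each missing it with
probability at most `exp (-K |U| / P)`.

While `|A|` is below `n ^ (99 / 100)` the rings of `A` overlap little: an exponential moment bound
replaces `|U|` by `|A| K`, and the terms sum to a geometric series of ratio `O(exp (-α))`. For
larger `A`, a union bound over all possible `U` shows that `|U|` is at least a constant fraction of
`min (|A| K) P` up to an exponentially small probability, which outweighs the number of choices of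
`A`.

These estimates need the expected degree `n K² / P` to be `O(log n)`. Since smaller nested key rings
give a subgraph, `K` may be truncated so that `n K² / P ≤ 3 log n`.
-/

open scoped BigOperators Pointwise

section UniformProb

open Classical in
/-- The probability of an event when the sample point is uniform on a finite type: the proportion
of sample points satisfying `p`. It is `0` on an empty sample space. -/
def uniformProb {Ω : Type*} [Fintype Ω] (p : Ω → Prop) : ℝ :=
  𝔼 ω, if p ω then 1 else 0

variable {Ω : Type*} [Fintype Ω] {p q : Ω → Prop}

lemma uniformProb_eq_expect (p : Ω → Prop) [DecidablePred p] :
    uniformProb p = 𝔼 ω, if p ω then 1 else 0 := by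
  classical
  exact Finset.expect_congr rfl fun ω _ => by congr

lemma uniformProb_nonneg (p : Ω → Prop) : 0 ≤ uniformProb p :=
  Finset.expect_nonneg fun _ _ => by split_ifs <;> norm_num

lemma uniformProb_mono (h : ∀ ω, p ω → q ω) : uniformProb p ≤ uniformProb q := by
  classical
  refine Finset.expect_le_expect fun ω _ => ?_
  by_cases hp : p ω
  · simp [hp, h ω hp]
  · split_ifs <;> norm_num

lemma uniformProb_congr (h : ∀ ω, p ω ↔ q ω) : uniformProb p = uniformProb q := by
  rw [funext fun ω => propext (h ω)]

lemma uniformProb_eq_card_div (p : Ω → Prop) [DecidablePred p] :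
    uniformProb p = (Finset.univ.filter p).card / Fintype.card Ω := by
  rw [uniformProb_eq_expect, Fintype.expect_eq_sum_div_card, Finset.sum_boole]

lemma uniformProb_not [Nonempty Ω] (p : Ω → Prop) :
    uniformProb (fun ω => ¬ p ω) = 1 - uniformProb p := by
  classical
  rw [uniformProb_eq_expect, uniformProb_eq_expect,
    ← Fintype.expect_const (ι := Ω) (1 : ℝ), ← Finset.expect_sub_distrib]
  refine Finset.expect_congr rfl fun ω _ => ?_
  split_ifs <;> norm_num

lemma uniformProb_le_one [Nonempty Ω] (p : Ω → Prop) : uniformProb p ≤ 1 := by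
  linarith [uniformProb_not p, uniformProb_nonneg fun ω => ¬ p ω]

lemma uniformProb_exists_mem_le {κ : Type*} (s : Finset κ) (q : κ → Ω → Prop) :
    uniformProb (fun ω => ∃ i ∈ s, q i ω) ≤ ∑ i ∈ s, uniformProb (q i) := by
  classical
  simp only [uniformProb_eq_expect]
  rw [← Finset.expect_sum_comm]
  refine Finset.expect_le_expect fun ω _ => ?_
  rw [Finset.sum_boole]
  split_ifs with h
  · obtain ⟨i, hi, hq⟩ := h
    exact_mod_cast Finset.card_pos.2 ⟨i, Finset.mem_filter.2 ⟨hi, hq⟩⟩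
  · positivity

end UniformProb

section Resampling

variable {ι β M : Type*} [Fintype ι] [DecidableEq ι] [Fintype β] [Nonempty β]
  [CommSemiring M] [Algebra ℚ≥0 M]

lemma expect_resample (a : ι) (f : (ι → β) → β → M)
    (hf : ∀ ω t s, f (Function.update ω a t) s = f ω s) :
    𝔼 ω, f ω (ω a) = 𝔼 ω, 𝔼 s, f ω s := by
  -- Exchanging the fresh sample with the `a`-th coordinate preserves the uniform distribution.
  let swap : (ι → β) × β → (ι → β) × β := fun p => (Function.update p.1 a p.2, p.1 a)
  have hswap : Function.Involutive swap := fun ⟨ω, s⟩ => by simp [swap]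
  calc 𝔼 ω, f ω (ω a) = 𝔼 p : (ι → β) × β, f p.1 (p.1 a) := by
        rw [← Finset.univ_product_univ, Finset.expect_product' (f := fun ω _ => f ω (ω a))]
        simp
    _ = 𝔼 p : (ι → β) × β, f p.1 p.2 :=
        Fintype.expect_equiv hswap.toPerm _ _ fun ⟨ω, s⟩ => by
          simp [Function.Involutive.toPerm, swap, hf]
    _ = 𝔼 ω, 𝔼 s, f ω s := by
        rw [← Finset.univ_product_univ, Finset.expect_product']

lemma expect_mul_prod (C : Finset ι) (F : (ι → β) → M) (g : ι → (ι → β) → β → M)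
    (hF : ∀ a ∈ C, ∀ ω t, F (Function.update ω a t) = F ω)
    (hg : ∀ a ∈ C, ∀ v ω t s, g v (Function.update ω a t) s = g v ω s) :
    𝔼 ω, F ω * ∏ v ∈ C, g v ω (ω v) = 𝔼 ω, F ω * ∏ v ∈ C, 𝔼 s, g v ω s := by
  induction C using Finset.induction_on generalizing F with
  | empty => simp
  | insert a C ha ih =>
    have hprod : ∀ ω t, ∏ v ∈ C, g v (Function.update ω a t) (Function.update ω a t v)
        = ∏ v ∈ C, g v ω (ω v) := fun ω t => Finset.prod_congr rfl fun v hv => by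
      rw [hg a (C.mem_insert_self a), Function.update_of_ne (ne_of_mem_of_not_mem hv ha)]
    calc 𝔼 ω, F ω * ∏ v ∈ insert a C, g v ω (ω v)
        = 𝔼 ω, (F ω * ∏ v ∈ C, g v ω (ω v)) * g a ω (ω a) :=
          Finset.expect_congr rfl fun ω _ => by rw [Finset.prod_insert ha]; ring
      _ = 𝔼 ω, 𝔼 s, (F ω * ∏ v ∈ C, g v ω (ω v)) * g a ω s :=
          expect_resample a (fun ω s => (F ω * ∏ v ∈ C, g v ω (ω v)) * g a ω s) fun ω t s => by
            rw [hprod, hF a (C.mem_insert_self a), hg a (C.mem_insert_self a)]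
      _ = 𝔼 ω, (F ω * 𝔼 s, g a ω s) * ∏ v ∈ C, g v ω (ω v) :=
          Finset.expect_congr rfl fun ω _ => by rw [← Finset.mul_expect]; ring
      _ = 𝔼 ω, (F ω * 𝔼 s, g a ω s) * ∏ v ∈ C, 𝔼 s, g v ω s :=
          ih _ (fun b hb ω t => by
            simp only [hF b (Finset.mem_insert_of_mem hb), hg b (Finset.mem_insert_of_mem hb)])
            fun b hb => hg b (Finset.mem_insert_of_mem hb)
      _ = 𝔼 ω, F ω * ∏ v ∈ insert a C, 𝔼 s, g v ω s :=
          Finset.expect_congr rfl fun ω _ => by rw [Finset.prod_insert ha]; ring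

lemma uniformProb_forall_mem (C : Finset ι) (q : ι → (ι → β) → β → Prop)
    (hq : ∀ a ∈ C, ∀ v ω t s, q v (Function.update ω a t) s ↔ q v ω s) :
    uniformProb (fun ω => ∀ v ∈ C, q v ω (ω v)) = 𝔼 ω, ∏ v ∈ C, uniformProb (q v ω) := by
  classical
  have hprod := expect_mul_prod C (fun _ => (1 : ℝ)) (fun v ω s => if q v ω s then 1 else 0)
    (fun _ _ _ _ => rfl) fun a ha v ω t s => by simp only [hq a ha]
  simp only [one_mul, Finset.prod_boole, ← uniformProb_eq_expect] at hprod
  rw [← hprod, uniformProb_eq_expect]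
  congr!

end Resampling

section TransitiveAction

instance isPretransitive_pi {ι G X : Type*} [Group G] [MulAction G X]
    [MulAction.IsPretransitive G X] : MulAction.IsPretransitive (ι → G) (ι → X) where
  exists_smul_eq x y := by
    choose g hg using fun i => MulAction.exists_smul_eq G (x i) (y i)
    exact ⟨g, funext hg⟩

lemma expect_smul_eq_expect {G X M : Type*} [Group G] [Fintype G] [Fintype X] [MulAction G X]
    [MulAction.IsPretransitive G X] [AddCommMonoid M] [Module ℚ≥0 M] (x : X) (f : X → M) :
    𝔼 g : G, f (g • x) = 𝔼 y, f y := by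
  have : Nonempty X := ⟨x⟩
  have hx : ∀ y : X, 𝔼 g : G, f (g • y) = 𝔼 g : G, f (g • x) := fun y => by
    obtain ⟨h, rfl⟩ := MulAction.exists_smul_eq G x y
    exact Fintype.expect_equiv (Equiv.mulRight h) _ _ fun g => by simp [mul_smul]
  calc 𝔼 g : G, f (g • x) = 𝔼 y : X, 𝔼 g : G, f (g • y) := by simp only [hx, Fintype.expect_const]
    _ = 𝔼 g : G, 𝔼 y : X, f (g • y) := Finset.expect_comm _ _ _
    _ = 𝔼 _g : G, 𝔼 y : X, f y := Finset.expect_congr rfl fun g _ =>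
        Fintype.expect_equiv (MulAction.toPerm g) _ _ fun y => rfl
    _ = 𝔼 y, f y := Fintype.expect_const _

end TransitiveAction

section KeyRing

variable {P K : ℕ}

instance : MulAction (Equiv.Perm (Fin P)) (KeyRing P K) :=
  inferInstanceAs (MulAction _ (Set.powersetCard (Fin P) K))

instance : MulAction.IsPretransitive (Equiv.Perm (Fin P)) (KeyRing P K) :=
  Set.powersetCard.isPretransitive

lemma coe_smul_keyRing (σ : Equiv.Perm (Fin P)) (s : KeyRing P K) :
    (σ • s).1 = σ • s.1 :=
  Set.powersetCard.coe_smul (G := Equiv.Perm (Fin P))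

lemma card_keyRing : Fintype.card (KeyRing P K) = P.choose K := by
  simp

lemma nonempty_keyRing (h : K ≤ P) : Nonempty (KeyRing P K) := by
  rw [← Fintype.card_pos_iff, card_keyRing]
  exact Nat.choose_pos h

lemma descFactorial_mul_pow_le {a N : ℕ} (h : a ≤ N) (b : ℕ) :
    a.descFactorial b * N ^ b ≤ N.descFactorial b * a ^ b := by
  induction b with
  | zero => simp
  | succ b ih =>
    have hfactor : (a - b) * N ≤ (N - b) * a := by
      rw [Nat.sub_mul, Nat.sub_mul, mul_comm N a]
      exact Nat.sub_le_sub_left (Nat.mul_le_mul_left b h) _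
    calc a.descFactorial (b + 1) * N ^ (b + 1)
        = ((a - b) * N) * (a.descFactorial b * N ^ b) := by
          rw [Nat.descFactorial_succ]; ring
      _ ≤ ((N - b) * a) * (N.descFactorial b * a ^ b) := Nat.mul_le_mul hfactor ih
      _ = N.descFactorial (b + 1) * a ^ (b + 1) := by rw [Nat.descFactorial_succ]; ring

lemma choose_div_choose_le_pow {a N : ℕ} (h : a ≤ N) (b : ℕ) :
    (a.choose b : ℝ) / N.choose b ≤ ((a : ℝ) / N) ^ b := by
  rcases lt_or_ge N b with hb | hb
  · rw [Nat.choose_eq_zero_of_lt hb, Nat.cast_zero, div_zero]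
    positivity
  · have hdesc : (a.descFactorial b : ℝ) * N ^ b ≤ N.descFactorial b * a ^ b := by
      exact_mod_cast descFactorial_mul_pow_le h b
    have hchoose : (0 : ℝ) < N.choose b := by exact_mod_cast Nat.choose_pos hb
    have hpow : (0 : ℝ) < (N : ℝ) ^ b := by
      rcases Nat.eq_zero_or_pos N with rfl | hN
      · simp [Nat.le_zero.1 hb]
      · positivity
    rw [Nat.descFactorial_eq_factorial_mul_choose, Nat.descFactorial_eq_factorial_mul_choose,
      Nat.cast_mul, Nat.cast_mul, mul_assoc, mul_assoc] at hdesc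
    rw [div_pow, div_le_div_iff₀ hchoose hpow, mul_comm _ (N.choose b : ℝ)]
    exact le_of_mul_le_mul_left hdesc (by positivity)

lemma uniformProb_keyRing_subset_le (W : Finset (Fin P)) :
    uniformProb (fun s : KeyRing P K => s.1 ⊆ W) ≤ ((W.card : ℝ) / P) ^ K := by
  have hcard : (Finset.univ.filter fun s : KeyRing P K => s.1 ⊆ W).card = W.card.choose K := by
    rw [← Finset.card_powersetCard, ← Finset.card_map (Function.Embedding.subtype _)]
    congr 1
    ext s
    simp [Finset.mem_powersetCard]
  rw [uniformProb_eq_card_div, card_keyRing, hcard]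
  exact choose_div_choose_le_pow (by simpa using W.card_le_univ) K

lemma uniformProb_subset_keyRing_le [Nonempty (KeyRing P K)] (B : Finset (Fin P)) :
    uniformProb (fun s : KeyRing P K => B ⊆ s.1) ≤ ((K : ℝ) / P) ^ B.card := by
  obtain ⟨s₀⟩ := ‹Nonempty (KeyRing P K)›
  let b₀ : KeyRing P B.card := ⟨B, rfl⟩
  -- Moving the ring by a permutation amounts to moving the set it contains by the inverse.
  have hdual : uniformProb (fun s : KeyRing P K => B ⊆ s.1)
      = uniformProb (fun b : KeyRing P B.card => b.1 ⊆ s₀.1) := by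
    rw [uniformProb_eq_expect, uniformProb_eq_expect,
      ← expect_smul_eq_expect (G := Equiv.Perm (Fin P)) s₀,
      ← expect_smul_eq_expect (G := Equiv.Perm (Fin P)) b₀]
    refine Fintype.expect_equiv (Equiv.inv _) _ _ fun σ => ?_
    simp only [coe_smul_keyRing, Equiv.inv_apply, Finset.subset_smul_finset_iff, b₀]
  rw [hdual]
  simpa only [s₀.2] using uniformProb_keyRing_subset_le s₀.1

lemma uniformProb_keyRing_disjoint_le [Nonempty (KeyRing P K)] (W : Finset (Fin P)) :
    uniformProb (fun s : KeyRing P K => ¬ (s.1 ∩ W).Nonempty)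
      ≤ Real.exp (-(K / P * W.card)) := by
  have hW : W.card ≤ P := by simpa using W.card_le_univ
  calc uniformProb (fun s : KeyRing P K => ¬ (s.1 ∩ W).Nonempty)
      = uniformProb (fun s : KeyRing P K => s.1 ⊆ Wᶜ) := uniformProb_congr fun s => by
        rw [Finset.not_nonempty_iff_eq_empty, ← Finset.disjoint_iff_inter_eq_empty,
          Finset.subset_compl_iff_disjoint_right]
    _ ≤ (((Wᶜ).card : ℝ) / P) ^ K := uniformProb_keyRing_subset_le Wᶜ
    _ ≤ (Real.exp (-(W.card / P))) ^ K := by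
        gcongr
        rcases Nat.eq_zero_or_pos P with rfl | hP
        · simp
        · have : (((Wᶜ).card : ℝ) / P) = -(W.card / P) + 1 := by
            rw [Finset.card_compl, Fintype.card_fin, Nat.cast_sub hW]
            field_simp
            ring
          exact this ▸ Real.add_one_le_exp _
    _ = Real.exp (-(K / P * W.card)) := by
        rw [← Real.exp_nat_mul]
        ring_nf

lemma uniformProb_keyRing_inter_nonempty_le [Nonempty (KeyRing P K)] (W : Finset (Fin P)) :
    uniformProb (fun s : KeyRing P K => (s.1 ∩ W).Nonempty) ≤ K / P * W.card :=
  calc uniformProb (fun s : KeyRing P K => (s.1 ∩ W).Nonempty)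
      = uniformProb (fun s : KeyRing P K => ∃ w ∈ W, {w} ⊆ s.1) := uniformProb_congr fun s => by
        simp [Finset.Nonempty, and_comm]
    _ ≤ ∑ w ∈ W, uniformProb (fun s : KeyRing P K => {w} ⊆ s.1) := uniformProb_exists_mem_le W _
    _ ≤ ∑ _w ∈ W, (K : ℝ) / P := Finset.sum_le_sum fun w _ => by
        simpa using uniformProb_subset_keyRing_le (K := K) {w}
    _ = K / P * W.card := by simp [mul_comm]

lemma exp_mul_card_inter_eq_sum {α : Type*} [DecidableEq α] (θ : ℝ) (s W : Finset α) :
    Real.exp (θ * (s ∩ W).card)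
      = ∑ B ∈ W.powerset, (Real.exp θ - 1) ^ B.card * if B ⊆ s then 1 else 0 := by
  calc Real.exp (θ * (s ∩ W).card) = ∏ _i ∈ s ∩ W, ((Real.exp θ - 1) + 1) := by
        rw [Finset.prod_const, sub_add_cancel, ← Real.exp_nat_mul, mul_comm]
    _ = ∑ B ∈ (s ∩ W).powerset, (Real.exp θ - 1) ^ B.card := by
        rw [Finset.prod_add_one]
        simp only [Finset.prod_const]
    _ = ∑ B ∈ W.powerset.filter (· ⊆ s), (Real.exp θ - 1) ^ B.card := by
        congr 1
        ext B
        simp only [Finset.mem_powerset, Finset.mem_filter, Finset.subset_inter_iff, and_comm]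
    _ = _ := by simp only [Finset.sum_filter, mul_ite, mul_one, mul_zero]

lemma expect_exp_card_inter_le [Nonempty (KeyRing P K)] (W : Finset (Fin P)) {θ : ℝ}
    (hθ : 0 ≤ θ) :
    𝔼 s : KeyRing P K, Real.exp (θ * (s.1 ∩ W).card)
      ≤ Real.exp ((Real.exp θ - 1) * (K / P) * W.card) := by
  have hexp : 0 ≤ Real.exp θ - 1 := by linarith [Real.add_one_le_exp θ]
  calc 𝔼 s : KeyRing P K, Real.exp (θ * (s.1 ∩ W).card)
      = ∑ B ∈ W.powerset, (Real.exp θ - 1) ^ B.card *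
          uniformProb (fun s : KeyRing P K => B ⊆ s.1) := by
        simp only [exp_mul_card_inter_eq_sum, Finset.expect_sum_comm, ← Finset.mul_expect,
          uniformProb_eq_expect]
    _ ≤ ∑ B ∈ W.powerset, (Real.exp θ - 1) ^ B.card * ((K : ℝ) / P) ^ B.card := by
        gcongr with B
        exact uniformProb_subset_keyRing_le B
    _ = ((Real.exp θ - 1) * (K / P) + 1) ^ W.card := by
        rw [← Finset.prod_const, Finset.prod_add_one]
        simp only [Finset.prod_const, mul_pow]
    _ ≤ Real.exp ((Real.exp θ - 1) * (K / P)) ^ W.card := by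
        gcongr
        exact Real.add_one_le_exp _
    _ = Real.exp ((Real.exp θ - 1) * (K / P) * W.card) := by
        rw [← Real.exp_nat_mul]
        ring_nf

end KeyRing

section KeyUnion

variable {ι : Type*} {P K : ℕ}

/-- The set of keys held by the nodes in `A`. -/
def keyUnion (ω : ι → KeyRing P K) (A : Finset ι) : Finset (Fin P) :=
  A.biUnion fun i => (ω i).1

lemma keyUnion_subset_iff {ω : ι → KeyRing P K} {A : Finset ι} {W : Finset (Fin P)} :
    keyUnion ω A ⊆ W ↔ ∀ v ∈ A, (ω v).1 ⊆ W :=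
  Finset.biUnion_subset

lemma card_keyUnion_le (ω : ι → KeyRing P K) (A : Finset ι) :
    (keyUnion ω A).card ≤ A.card * K :=
  Finset.card_biUnion_le_card_mul _ _ _ fun i _ => (ω i).2.le

variable [DecidableEq ι]

lemma keyUnion_update (ω : ι → KeyRing P K) {A : Finset ι} {a : ι} (ha : a ∉ A)
    (t : KeyRing P K) : keyUnion (Function.update ω a t) A = keyUnion ω A :=
  Finset.biUnion_congr rfl fun v hv => by
    rw [Function.update_of_ne (ne_of_mem_of_not_mem hv ha)]

lemma card_keyUnion_insert (ω : ι → KeyRing P K) (A : Finset ι) (a : ι) :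
    (keyUnion ω (insert a A)).card + ((ω a).1 ∩ keyUnion ω A).card
      = K + (keyUnion ω A).card := by
  have hunion : keyUnion ω (insert a A) = (ω a).1 ∪ keyUnion ω A := Finset.biUnion_insert
  rw [hunion, Finset.card_union_add_card_inter, (ω a).2]

variable [Fintype ι] [Nonempty (KeyRing P K)]

lemma expect_exp_card_keyUnion_insert_le {θ : ℝ} (hθ : 0 ≤ θ) {A : Finset ι} {a : ι}
    (ha : a ∉ A) :
    𝔼 ω : ι → KeyRing P K, Real.exp (-(θ * (keyUnion ω (insert a A)).card))
      ≤ (𝔼 ω : ι → KeyRing P K, Real.exp (-(θ * (keyUnion ω A).card))) *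
        Real.exp (-(θ * K) + (Real.exp θ - 1) * (K / P) * (A.card * K)) := by
  have hexp : 0 ≤ Real.exp θ - 1 := by linarith [Real.add_one_le_exp θ]
  let F : (ι → KeyRing P K) → KeyRing P K → ℝ := fun ω s =>
    Real.exp (-(θ * (keyUnion ω A).card)) *
      (Real.exp (-(θ * K)) * Real.exp (θ * (s.1 ∩ keyUnion ω A).card))
  calc 𝔼 ω : ι → KeyRing P K, Real.exp (-(θ * (keyUnion ω (insert a A)).card))
      = 𝔼 ω : ι → KeyRing P K, F ω (ω a) := by
        refine Finset.expect_congr rfl fun ω _ => ?_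
        have hcard : ((keyUnion ω (insert a A)).card : ℝ) + ((ω a).1 ∩ keyUnion ω A).card
            = K + (keyUnion ω A).card := by exact_mod_cast card_keyUnion_insert ω A a
        simp only [F, ← Real.exp_add]
        congr 1
        linear_combination (-θ) * hcard
    _ = 𝔼 ω : ι → KeyRing P K, 𝔼 s : KeyRing P K, F ω s :=
        expect_resample a F fun ω t s => by simp only [F, keyUnion_update ω ha]
    _ ≤ 𝔼 ω : ι → KeyRing P K, Real.exp (-(θ * (keyUnion ω A).card)) *
          Real.exp (-(θ * K) + (Real.exp θ - 1) * (K / P) * (A.card * K)) := by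
        refine Finset.expect_le_expect fun ω _ => ?_
        simp only [F, ← Finset.mul_expect, Real.exp_add]
        gcongr
        refine (expect_exp_card_inter_le _ hθ).trans (Real.exp_le_exp.2 ?_)
        gcongr
        exact_mod_cast card_keyUnion_le ω A
    _ = _ := (Finset.expect_mul _ _ _).symm

lemma expect_exp_card_keyUnion_le {θ : ℝ} (hθ : 0 ≤ θ) (A : Finset ι) :
    𝔼 ω : ι → KeyRing P K, Real.exp (-(θ * (keyUnion ω A).card))
      ≤ Real.exp (-(θ * (A.card * K)) + (Real.exp θ - 1) * (K / P) * K * (A.card : ℝ) ^ 2) := by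
  have hexp : 0 ≤ Real.exp θ - 1 := by linarith [Real.add_one_le_exp θ]
  induction A using Finset.induction_on with
  | empty => simp [keyUnion]
  | insert a A ha ih =>
    refine (expect_exp_card_keyUnion_insert_le hθ ha).trans
      ((mul_le_mul_of_nonneg_right ih (Real.exp_nonneg _)).trans ?_)
    rw [← Real.exp_add, Finset.card_insert_of_notMem ha, Real.exp_le_exp]
    push_cast
    have : 0 ≤ (Real.exp θ - 1) * (K / P) * K * (A.card + 1) := by positivity
    nlinarith

lemma uniformProb_keyUnion_subset_le (A : Finset ι) (W : Finset (Fin P)) :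
    uniformProb (fun ω : ι → KeyRing P K => keyUnion ω A ⊆ W)
      ≤ ((W.card : ℝ) / P) ^ (K * A.card) := by
  calc uniformProb (fun ω : ι → KeyRing P K => keyUnion ω A ⊆ W)
      = uniformProb (fun s : KeyRing P K => s.1 ⊆ W) ^ A.card := by
        simp only [keyUnion_subset_iff]
        rw [uniformProb_forall_mem A (fun _ _ (s : KeyRing P K) => s.1 ⊆ W)
          fun _ _ _ _ _ _ => Iff.rfl, Fintype.expect_const, Finset.prod_const]
    _ ≤ (((W.card : ℝ) / P) ^ K) ^ A.card :=
        pow_le_pow_left₀ (uniformProb_nonneg _) (uniformProb_keyRing_subset_le W) _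
    _ = ((W.card : ℝ) / P) ^ (K * A.card) := (pow_mul _ _ _).symm

lemma uniformProb_card_keyUnion_lt_le (A : Finset ι) {m : ℕ} (hm : m ≤ P) :
    uniformProb (fun ω : ι → KeyRing P K => (keyUnion ω A).card < m)
      ≤ P.choose m * ((m : ℝ) / P) ^ (K * A.card) := by
  calc uniformProb (fun ω : ι → KeyRing P K => (keyUnion ω A).card < m)
      ≤ uniformProb (fun ω : ι → KeyRing P K =>
          ∃ W ∈ Finset.univ.powersetCard m, keyUnion ω A ⊆ W) := by
        refine uniformProb_mono fun ω hlt => ?_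
        obtain ⟨W, hUW, hW, hcard⟩ := Finset.exists_subsuperset_card_eq
          (Finset.subset_univ (keyUnion ω A)) hlt.le (by simpa using hm)
        exact ⟨W, Finset.mem_powersetCard.2 ⟨hW, hcard⟩, hUW⟩
    _ ≤ ∑ W ∈ Finset.univ.powersetCard m,
          uniformProb (fun ω : ι → KeyRing P K => keyUnion ω A ⊆ W) :=
        uniformProb_exists_mem_le _ _
    _ ≤ ∑ _W ∈ (Finset.univ : Finset (Fin P)).powersetCard m,
          ((m : ℝ) / P) ^ (K * A.card) := by
        refine Finset.sum_le_sum fun W hW => ?_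
        simpa only [(Finset.mem_powersetCard.1 hW).2] using uniformProb_keyUnion_subset_le A W
    _ = P.choose m * ((m : ℝ) / P) ^ (K * A.card) := by simp

lemma expect_exp_card_keyUnion_le_add {θ : ℝ} (hθ : 0 ≤ θ) (A : Finset ι) {m : ℕ}
    (hm : m ≤ P) :
    𝔼 ω : ι → KeyRing P K, Real.exp (-(θ * (keyUnion ω A).card))
      ≤ Real.exp (-(θ * m)) + P.choose m * ((m : ℝ) / P) ^ (K * A.card) := by
  calc 𝔼 ω : ι → KeyRing P K, Real.exp (-(θ * (keyUnion ω A).card))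
      ≤ 𝔼 ω : ι → KeyRing P K,
          (Real.exp (-(θ * m)) + if (keyUnion ω A).card < m then 1 else 0) := by
        refine Finset.expect_le_expect fun ω _ => ?_
        split_ifs with hlt
        · have : Real.exp (-(θ * (keyUnion ω A).card)) ≤ 1 :=
            Real.exp_le_one_iff.2 (neg_nonpos.2 (by positivity))
          linarith [Real.exp_nonneg (-(θ * m))]
        · rw [add_zero]
          gcongr
          exact not_lt.1 hlt
    _ = Real.exp (-(θ * m)) +
          uniformProb (fun ω : ι → KeyRing P K => (keyUnion ω A).card < m) := by
        rw [Finset.expect_add_distrib, Fintype.expect_const, uniformProb_eq_expect]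
    _ ≤ _ := by
        gcongr
        exact uniformProb_card_keyUnion_lt_le A hm

end KeyUnion

section OuterBoundary

variable {V : Type*} [Fintype V]

open Classical in
/-- The outer vertex boundary of `A`: the vertices outside `A` with a neighbour in `A`. -/
def outerBoundary (G : SimpleGraph V) (A : Finset V) : Finset V :=
  {v | v ∉ A ∧ ∃ a ∈ A, G.Adj a v}

variable {G : SimpleGraph V}

lemma mem_outerBoundary {A : Finset V} {v : V} :
    v ∈ outerBoundary G A ↔ v ∉ A ∧ ∃ a ∈ A, G.Adj a v := by
  simp [outerBoundary]

lemma outerBoundary_component_subset {S A : Finset V}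
    (C : (G.induce ((S : Set V)ᶜ)).ConnectedComponent) (hA : (A : Set V) = Subtype.val '' C.supp) :
    outerBoundary G A ⊆ S := by
  intro v hv
  obtain ⟨hvA, a, ha, hav⟩ := mem_outerBoundary.1 hv
  by_contra hvS
  obtain ⟨a, haC, rfl⟩ : a ∈ Subtype.val '' C.supp := hA ▸ Finset.mem_coe.2 ha
  have hvC : (⟨v, by simpa using hvS⟩ : ((S : Set V)ᶜ : Set V)) ∈ C.supp :=
    C.mem_supp_of_adj_mem_supp haC (by simpa using hav)
  exact hvA (Finset.mem_coe.1 (hA ▸ ⟨_, hvC, rfl⟩))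

lemma exists_outerBoundary_subset_of_not_preconnected {S : Finset V}
    (hS : ¬ (G.induce ((S : Set V)ᶜ)).Preconnected) :
    ∃ A : Finset V, A.Nonempty ∧ 2 * A.card ≤ Fintype.card V ∧ outerBoundary G A ⊆ S := by
  classical
  obtain ⟨C, D, hCD⟩ : ∃ C D : (G.induce ((S : Set V)ᶜ)).ConnectedComponent, C ≠ D := by
    by_contra! heq
    exact hS fun a b => SimpleGraph.ConnectedComponent.eq.1 (heq _ _)
  let comp : (G.induce ((S : Set V)ᶜ)).ConnectedComponent → Finset V :=
    fun C => (Subtype.val '' C.supp).toFinset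
  have hcomp : ∀ C, (comp C : Set V) = Subtype.val '' C.supp := fun C => Set.coe_toFinset _
  have hne : ∀ C, (comp C).Nonempty := fun C => by
    rw [← Finset.coe_nonempty, hcomp]
    exact C.nonempty_supp.image _
  have hdisj : Disjoint (comp C) (comp D) := by
    rw [← Finset.disjoint_coe, hcomp, hcomp, Set.disjoint_image_iff Subtype.val_injective]
    exact SimpleGraph.pairwise_disjoint_supp_connectedComponent _ hCD
  have hcard : (comp C).card + (comp D).card ≤ Fintype.card V :=
    Finset.card_union_of_disjoint hdisj ▸ Finset.card_le_univ _
  obtain ⟨E, hE⟩ : ∃ E, 2 * (comp E).card ≤ Fintype.card V := by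
    rcases le_total (comp C).card (comp D).card with hle | hle
    exacts [⟨C, by lia⟩, ⟨D, by lia⟩]
  exact ⟨comp E, hne E, hE, outerBoundary_component_subset E (hcomp E)⟩

lemma exists_card_outerBoundary_lt_of_not_kConnected {k : ℕ} (hk : 1 ≤ k)
    (hkV : k ≤ Fintype.card V) (hG : ¬ KConnected G k) :
    ∃ A : Finset V, A.Nonempty ∧ 2 * A.card ≤ Fintype.card V ∧ (outerBoundary G A).card < k := by
  obtain ⟨S, hS, hdisc⟩ : ∃ S : Finset V, S.card ≤ k - 1 ∧
      ¬ (G.induce ((S : Set V)ᶜ)).Connected := by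
    simpa only [KConnected, not_forall, exists_prop] using hG
  obtain ⟨v, hv⟩ : ∃ v, v ∉ S := by
    by_contra! hall
    have := Finset.card_univ (α := V) ▸ Finset.eq_univ_iff_forall.2 hall ▸ hS
    lia
  have hpre : ¬ (G.induce ((S : Set V)ᶜ)).Preconnected := fun h =>
    have : Nonempty ((S : Set V)ᶜ : Set V) := ⟨v, by simpa using hv⟩
    hdisc ⟨h⟩
  obtain ⟨A, hA, hcard, hsub⟩ := exists_outerBoundary_subset_of_not_preconnected hpre
  exact ⟨A, hA, hcard, by have := Finset.card_le_card hsub; lia⟩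

end OuterBoundary

lemma monotone_kConnected {V : Type*} {k : ℕ} : Monotone fun G : SimpleGraph V => KConnected G k :=
  fun _ _ hGH hG S hS => (hG S hS).mono (SimpleGraph.comap_monotone _ hGH)

section RandomKeyGraph

variable {n P K : ℕ}

lemma mem_outerBoundary_rkgGraph {ω : Fin n → KeyRing P K} {A : Finset (Fin n)} {v : Fin n} :
    v ∈ outerBoundary (rkgGraph ω) A ↔ v ∉ A ∧ ((ω v).1 ∩ keyUnion ω A).Nonempty := by
  rw [mem_outerBoundary]
  refine and_congr_right fun hv => ⟨?_, ?_⟩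
  · rintro ⟨a, ha, -, x, hx⟩
    rw [Finset.mem_inter] at hx
    exact ⟨x, Finset.mem_inter.2 ⟨hx.2, Finset.mem_biUnion.2 ⟨a, ha, hx.1⟩⟩⟩
  · rintro ⟨x, hx⟩
    rw [Finset.mem_inter] at hx
    obtain ⟨a, ha, hxa⟩ := Finset.mem_biUnion.1 hx.2
    exact ⟨a, ha, ne_of_mem_of_not_mem ha hv, x, Finset.mem_inter.2 ⟨hxa, hx.1⟩⟩

lemma outerBoundary_rkgGraph_eq_iff {ω : Fin n → KeyRing P K} {A J : Finset (Fin n)}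
    (hJ : J ⊆ Aᶜ) : outerBoundary (rkgGraph ω) A = J ↔
      ∀ v ∈ Aᶜ, (v ∈ J ↔ ((ω v).1 ∩ keyUnion ω A).Nonempty) := by
  simp only [Finset.ext_iff, mem_outerBoundary_rkgGraph, Finset.mem_compl]
  refine forall_congr' fun v => ?_
  by_cases hv : v ∈ A
  · simpa [hv] using fun hvJ => Finset.mem_compl.1 (hJ hvJ) hv
  · simp [hv, iff_comm]

lemma uniformProb_not_kConnected_le_sum {k : ℕ} (hk : 1 ≤ k) (hkn : k ≤ n) (b : ℕ → ℝ)
    (hb : ∀ A : Finset (Fin n), 1 ≤ A.card → A.card ≤ n / 2 → n.choose A.card *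
      uniformProb (fun ω : Fin n → KeyRing P K => (outerBoundary (rkgGraph ω) A).card < k)
        ≤ b A.card) :
    uniformProb (fun ω : Fin n → KeyRing P K => ¬ KConnected (rkgGraph ω) k)
      ≤ ∑ r ∈ Finset.Icc 1 (n / 2), b r := by
  calc uniformProb (fun ω : Fin n → KeyRing P K => ¬ KConnected (rkgGraph ω) k)
      ≤ uniformProb (fun ω : Fin n → KeyRing P K => ∃ r ∈ Finset.Icc 1 (n / 2),
          ∃ A ∈ Finset.univ.powersetCard r, (outerBoundary (rkgGraph ω) A).card < k) := by
        refine uniformProb_mono fun ω hω => ?_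
        obtain ⟨A, hA, hcard, hlt⟩ :=
          exists_card_outerBoundary_lt_of_not_kConnected hk (by simpa using hkn) hω
        rw [Fintype.card_fin] at hcard
        exact ⟨A.card, Finset.mem_Icc.2 ⟨hA.card_pos, by lia⟩, A, by simp, hlt⟩
    _ ≤ ∑ r ∈ Finset.Icc 1 (n / 2), ∑ A ∈ Finset.univ.powersetCard r,
          uniformProb (fun ω : Fin n → KeyRing P K =>
            (outerBoundary (rkgGraph ω) A).card < k) :=
        (uniformProb_exists_mem_le _ _).trans
          (Finset.sum_le_sum fun r _ => uniformProb_exists_mem_le _ _)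
    _ ≤ ∑ r ∈ Finset.Icc 1 (n / 2),
          ∑ _A ∈ (Finset.univ : Finset (Fin n)).powersetCard r, b r / n.choose r := by
        refine Finset.sum_le_sum fun r hr => Finset.sum_le_sum fun A hA => ?_
        obtain ⟨-, rfl⟩ := Finset.mem_powersetCard.1 hA
        rw [Finset.mem_Icc] at hr
        rw [le_div_iff₀' (by exact_mod_cast Nat.choose_pos (by lia))]
        exact hb A hr.1 hr.2
    _ = ∑ r ∈ Finset.Icc 1 (n / 2), b r := by
        refine Finset.sum_congr rfl fun r hr => ?_
        have hchoose : (n.choose r : ℝ) ≠ 0 := by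
          exact_mod_cast (Nat.choose_pos (by have := (Finset.mem_Icc.1 hr).2; lia)).ne'
        simp [mul_div_cancel₀ _ hchoose]

variable [Nonempty (KeyRing P K)]

lemma prod_uniformProb_mem_iff_inter_nonempty_le {ι : Type*} {B J : Finset ι}
    (hJ : J ⊆ B) (U : Finset (Fin P)) :
    ∏ v ∈ B, uniformProb (fun s : KeyRing P K => v ∈ J ↔ (s.1 ∩ U).Nonempty)
      ≤ (K / P * U.card) ^ J.card * Real.exp (-((B.card - J.card) * (K / P) * U.card)) := by
  classical
  have hin : ∏ v ∈ J, uniformProb (fun s : KeyRing P K => v ∈ J ↔ (s.1 ∩ U).Nonempty)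
      ≤ (K / P * U.card) ^ J.card := by
    rw [← Finset.prod_const]
    refine Finset.prod_le_prod (fun v _ => uniformProb_nonneg _) fun v hv => ?_
    simpa only [hv, true_iff] using uniformProb_keyRing_inter_nonempty_le U
  have hout : ∏ v ∈ B \ J, uniformProb (fun s : KeyRing P K => v ∈ J ↔ (s.1 ∩ U).Nonempty)
      ≤ Real.exp (-(K / P * U.card)) ^ (B \ J).card := by
    rw [← Finset.prod_const]
    refine Finset.prod_le_prod (fun v _ => uniformProb_nonneg _) fun v hv => ?_
    simpa only [(Finset.mem_sdiff.1 hv).2, false_iff] using uniformProb_keyRing_disjoint_le U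
  have hexp : Real.exp (-(K / P * U.card)) ^ (B \ J).card
      = Real.exp (-((B.card - J.card) * (K / P) * U.card)) := by
    rw [← Real.exp_nat_mul, Finset.card_sdiff_of_subset hJ,
      Nat.cast_sub (Finset.card_le_card hJ)]
    ring_nf
  rw [← Finset.prod_sdiff hJ, mul_comm, ← hexp]
  exact mul_le_mul hin hout (Finset.prod_nonneg fun v _ => uniformProb_nonneg _) (by positivity)

lemma uniformProb_outerBoundary_eq_le {A J : Finset (Fin n)} (hJ : J ⊆ Aᶜ) :
    uniformProb (fun ω : Fin n → KeyRing P K => outerBoundary (rkgGraph ω) A = J)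
      ≤ (A.card * (K ^ 2 / P)) ^ J.card * 𝔼 ω : Fin n → KeyRing P K,
          Real.exp (-((n - A.card - J.card) * (K / P) * (keyUnion ω A).card)) := by
  have hcompl : ((Aᶜ).card : ℝ) = n - A.card := by
    rw [Finset.card_compl, Fintype.card_fin, Nat.cast_sub (by simpa using A.card_le_univ)]
  -- Given the keys held by `A`, the other nodes choose their rings independently.
  rw [uniformProb_congr fun ω => outerBoundary_rkgGraph_eq_iff hJ,
    uniformProb_forall_mem Aᶜ (fun v ω s => v ∈ J ↔ (s.1 ∩ keyUnion ω A).Nonempty)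
      (fun a ha v ω t s => by rw [keyUnion_update ω (Finset.mem_compl.1 ha)]), Finset.mul_expect]
  refine Finset.expect_le_expect fun ω _ =>
    (prod_uniformProb_mem_iff_inter_nonempty_le hJ _).trans ?_
  rw [hcompl]
  refine mul_le_mul_of_nonneg_right (pow_le_pow_left₀ (by positivity) ?_ _) (Real.exp_nonneg _)
  calc (K : ℝ) / P * (keyUnion ω A).card ≤ K / P * (A.card * K) := by
        gcongr
        exact_mod_cast card_keyUnion_le ω A
    _ = A.card * (K ^ 2 / P) := by ring

lemma uniformProb_card_outerBoundary_eq_le (A : Finset (Fin n)) (j : ℕ) :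
    uniformProb (fun ω : Fin n → KeyRing P K => (outerBoundary (rkgGraph ω) A).card = j)
      ≤ (A.card * (n * (K ^ 2 / P))) ^ j * 𝔼 ω : Fin n → KeyRing P K,
          Real.exp (-((n - A.card - j) * (K / P) * (keyUnion ω A).card)) := by
  set E : ℝ := 𝔼 ω : Fin n → KeyRing P K,
    Real.exp (-((n - A.card - j) * (K / P) * (keyUnion ω A).card))
  have hE0 : 0 ≤ E := Finset.expect_nonneg fun ω _ => Real.exp_nonneg _
  calc uniformProb (fun ω : Fin n → KeyRing P K => (outerBoundary (rkgGraph ω) A).card = j)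
      = uniformProb (fun ω : Fin n → KeyRing P K =>
          ∃ J ∈ (Aᶜ).powersetCard j, outerBoundary (rkgGraph ω) A = J) := by
        refine uniformProb_congr fun ω => ?_
        have hsub : outerBoundary (rkgGraph ω) A ⊆ Aᶜ := fun v hv =>
          Finset.mem_compl.2 (mem_outerBoundary.1 hv).1
        simp [Finset.mem_powersetCard, hsub]
    _ ≤ ∑ J ∈ (Aᶜ).powersetCard j,
          uniformProb (fun ω : Fin n → KeyRing P K => outerBoundary (rkgGraph ω) A = J) :=
        uniformProb_exists_mem_le _ _
    _ ≤ ∑ _J ∈ (Aᶜ).powersetCard j, (A.card * (K ^ 2 / P)) ^ j * E := by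
        refine Finset.sum_le_sum fun J hJ => ?_
        obtain ⟨hJA, rfl⟩ := Finset.mem_powersetCard.1 hJ
        exact uniformProb_outerBoundary_eq_le hJA
    _ = (Aᶜ).card.choose j * ((A.card * (K ^ 2 / P)) ^ j * E) := by simp
    _ ≤ n ^ j * ((A.card * (K ^ 2 / P)) ^ j * E) := by
        gcongr
        exact_mod_cast (Nat.choose_le_pow _ _).trans
          (Nat.pow_le_pow_left (by simpa using (Aᶜ).card_le_univ) j)
    _ = (A.card * (n * (K ^ 2 / P))) ^ j * E := by
        rw [← mul_assoc, ← mul_pow]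
        ring_nf

lemma uniformProb_card_outerBoundary_lt_le (A : Finset (Fin n)) (k : ℕ) :
    uniformProb (fun ω : Fin n → KeyRing P K => (outerBoundary (rkgGraph ω) A).card < k)
      ≤ (∑ j ∈ Finset.range k, (A.card * (n * ((K : ℝ) ^ 2 / P))) ^ j) *
          𝔼 ω : Fin n → KeyRing P K,
            Real.exp (-((n - A.card - k) * (K / P) * (keyUnion ω A).card)) := by
  calc uniformProb (fun ω : Fin n → KeyRing P K => (outerBoundary (rkgGraph ω) A).card < k)
      = uniformProb (fun ω : Fin n → KeyRing P K =>
          ∃ j ∈ Finset.range k, (outerBoundary (rkgGraph ω) A).card = j) := by simp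
    _ ≤ ∑ j ∈ Finset.range k, uniformProb (fun ω : Fin n → KeyRing P K =>
          (outerBoundary (rkgGraph ω) A).card = j) := uniformProb_exists_mem_le _ _
    _ ≤ ∑ j ∈ Finset.range k, (A.card * (n * ((K : ℝ) ^ 2 / P))) ^ j *
          𝔼 ω : Fin n → KeyRing P K,
            Real.exp (-((n - A.card - k) * (K / P) * (keyUnion ω A).card)) := by
        refine Finset.sum_le_sum fun j hj => (uniformProb_card_outerBoundary_eq_le A j).trans ?_
        have : (j : ℝ) ≤ k := by exact_mod_cast (Finset.mem_range.1 hj).le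
        gcongr
    _ = _ := (Finset.sum_mul _ _ _).symm

end RandomKeyGraph

section Coupling

variable {n P K K' : ℕ}

lemma rkgGraph_mono {ω' : Fin n → KeyRing P K'} {ω : Fin n → KeyRing P K}
    (h : ∀ v, (ω' v).1 ⊆ (ω v).1) : rkgGraph ω' ≤ rkgGraph ω :=
  fun i j ⟨hij, hne⟩ => ⟨hij, hne.mono (Finset.inter_subset_inter (h i) (h j))⟩

lemma uniformProb_rkgGraph_mono {Q : SimpleGraph (Fin n) → Prop} (hQ : Monotone Q)
    (hK : K' ≤ K) (hKP : K ≤ P) :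
    uniformProb (fun ω : Fin n → KeyRing P K' => Q (rkgGraph ω))
      ≤ uniformProb (fun ω : Fin n → KeyRing P K => Q (rkgGraph ω)) := by
  classical
  obtain ⟨s⟩ := nonempty_keyRing hKP
  obtain ⟨t, hts, ht⟩ := Finset.exists_subset_card_eq (hK.trans s.2.ge)
  let t : KeyRing P K' := ⟨t, ht⟩
  -- Couple the two models by applying the same random permutations to nested rings `t ⊆ s`.
  have hperm : ∀ {L : ℕ} (s : KeyRing P L),
      uniformProb (fun ω : Fin n → KeyRing P L => Q (rkgGraph ω))
        = uniformProb (fun σ : Fin n → Equiv.Perm (Fin P) => Q (rkgGraph fun v => σ v • s)) :=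
    fun s => by
      rw [uniformProb_eq_expect, uniformProb_eq_expect]
      exact (expect_smul_eq_expect (fun _ => s) fun ω => if Q (rkgGraph ω) then (1 : ℝ) else 0).symm
  rw [hperm s, hperm t]
  refine uniformProb_mono fun σ => hQ (rkgGraph_mono fun v => ?_)
  simp only [coe_smul_keyRing]
  exact Finset.smul_finset_subset_smul_finset hts

end Coupling

section Measure

variable {n P K : ℕ}

instance : DiscreteMeasurableSpace (KeyRing P K) := ⟨fun _ => trivial⟩

lemma uniformKeyMeasure_eq_uniformOn :
    uniformKeyMeasure P K = ProbabilityTheory.uniformOn Set.univ := by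
  ext s
  rw [ProbabilityTheory.uniformOn_univ, uniformKeyMeasure, Measure.smul_apply, smul_eq_mul,
    ENNReal.div_eq_inv_mul]

lemma rkgMeasure_eq_uniformOn :
    rkgMeasure n K P = ProbabilityTheory.uniformOn Set.univ := by
  rw [rkgMeasure, uniformKeyMeasure_eq_uniformOn, ← ProbabilityTheory.uniformOn_pi,
    Set.pi_univ]

lemma uniformOn_univ_eq_ofReal_uniformProb {Ω : Type*} [Fintype Ω] [Nonempty Ω]
    [MeasurableSpace Ω] [MeasurableSingletonClass Ω] (p : Ω → Prop) :
    ProbabilityTheory.uniformOn Set.univ {ω | p ω} = ENNReal.ofReal (uniformProb p) := by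
  classical
  rw [ProbabilityTheory.uniformOn_univ, uniformProb_eq_card_div,
    ENNReal.ofReal_div_of_pos (by exact_mod_cast Fintype.card_pos), ENNReal.ofReal_natCast,
    ENNReal.ofReal_natCast, ← Measure.count_apply_finset]
  simp

lemma rkgMeasure_setOf (h : K ≤ P) (p : (Fin n → KeyRing P K) → Prop) :
    rkgMeasure n K P {ω | p ω} = ENNReal.ofReal (uniformProb p) := by
  have := nonempty_keyRing h
  rw [rkgMeasure_eq_uniformOn, uniformOn_univ_eq_ofReal_uniformProb]

end Measure

section Estimates

lemma choose_le_exp_mul_div_pow (n r : ℕ) :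
    (n.choose r : ℝ) ≤ Real.exp r * ((n : ℝ) / r) ^ r := by
  rcases Nat.eq_zero_or_pos r with rfl | hr
  · simp
  · calc (n.choose r : ℝ) ≤ (n : ℝ) ^ r / r.factorial := Nat.choose_le_pow_div r n
      _ = (r : ℝ) ^ r / r.factorial * ((n : ℝ) / r) ^ r := by
          rw [div_pow]
          field_simp
      _ ≤ Real.exp r * ((n : ℝ) / r) ^ r := by
          gcongr
          exact Real.pow_div_factorial_le_exp _ (by positivity) _

lemma choose_mul_div_pow_le_exp (n r : ℕ) :
    (n.choose r : ℝ) * ((r : ℝ) / n) ^ r ≤ Real.exp r := by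
  have hinv : (n : ℝ) / r * (r / n) ≤ 1 := by
    rw [← inv_div]
    exact inv_mul_le_one
  calc (n.choose r : ℝ) * ((r : ℝ) / n) ^ r
      ≤ Real.exp r * ((n : ℝ) / r) ^ r * ((r : ℝ) / n) ^ r := by
        gcongr
        exact choose_le_exp_mul_div_pow n r
    _ = Real.exp r * ((n : ℝ) / r * (r / n)) ^ r := by rw [mul_assoc, mul_pow]
    _ ≤ Real.exp r := mul_le_of_le_one_right (Real.exp_nonneg _)
        (pow_le_one₀ (by positivity) hinv)

lemma exp_mul_quarter_pow_le {m N : ℕ} (h : 4 * m ≤ N) :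
    Real.exp m * (1 / 4 : ℝ) ^ (N - m) ≤ (1 / 2 : ℝ) ^ N := by
  have hexp : Real.exp m ≤ 4 ^ m := by
    rw [← Real.exp_one_pow]
    exact pow_le_pow_left₀ (Real.exp_nonneg _) (by linarith [Real.exp_one_lt_d9]) m
  calc Real.exp m * (1 / 4 : ℝ) ^ (N - m)
      ≤ 4 ^ m * (1 / 4 : ℝ) ^ (m + (N - 2 * m)) := by
        gcongr ?_ * ?_
        exact (congrArg _ (by lia)).le
    _ = (1 / 2 : ℝ) ^ (2 * (N - 2 * m)) := by
        rw [pow_add, ← mul_assoc, ← mul_pow, pow_mul]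
        norm_num
    _ ≤ (1 / 2 : ℝ) ^ N := pow_le_pow_of_le_one (by norm_num) (by norm_num) (by lia)

lemma choose_mul_div_pow_le {P m N r : ℕ} (hN : 4 * m ≤ N) (hP : 4 * m ≤ P) (hr : r ≤ N - m) :
    (P.choose m : ℝ) * ((m : ℝ) / P) ^ N ≤ (4 * m / P) ^ r * (1 / 2 : ℝ) ^ N := by
  have hfrac : (4 * m / P : ℝ) ≤ 1 :=
    div_le_one_of_le₀ (by exact_mod_cast hP) (by positivity)
  calc (P.choose m : ℝ) * ((m : ℝ) / P) ^ N
      = (P.choose m * ((m : ℝ) / P) ^ m) * ((m : ℝ) / P) ^ (N - m) := by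
        rw [mul_assoc, ← pow_add, Nat.add_sub_of_le (by lia)]
    _ ≤ Real.exp m * ((m : ℝ) / P) ^ (N - m) := by
        gcongr
        exact choose_mul_div_pow_le_exp P m
    _ = (4 * m / P) ^ (N - m) * (Real.exp m * (1 / 4 : ℝ) ^ (N - m)) := by
        have : (m : ℝ) / P = 4 * m / P * (1 / 4) := by ring
        rw [this, mul_pow]
        ring
    _ ≤ (4 * m / P) ^ r * (1 / 2 : ℝ) ^ N :=
        mul_le_mul (pow_le_pow_of_le_one (by positivity) hfrac hr) (exp_mul_quarter_pow_le hN)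
          (by positivity) (by positivity)

lemma choose_mul_choose_mul_div_pow_le {n K P r m : ℕ} {c : ℝ} (hc : 0 < c) (hcP : c * n ≤ P)
    (hK : 2 ≤ K) (hmr : 4 * m ≤ K * r) (hmP : 4 * m ≤ P) :
    (n.choose r : ℝ) * (P.choose m * ((m : ℝ) / P) ^ (K * r))
      ≤ (Real.exp 1 * (K / c) * (1 / 2 : ℝ) ^ K) ^ r := by
  have hrK : r ≤ K * r - m := by
    have := Nat.mul_le_mul_right r hK
    lia
  have hbase : (n : ℝ) / r * (4 * m / P) ≤ K / c := by
    have hpool : (n : ℝ) / P ≤ 1 / c :=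
      div_le_of_le_mul₀ (by positivity) (by positivity) (by
        rw [one_div_mul_eq_div, le_div_iff₀' hc]
        exact hcP)
    have hring : (4 * m : ℝ) / r ≤ K :=
      div_le_of_le_mul₀ (by positivity) (by positivity) (by exact_mod_cast hmr)
    calc (n : ℝ) / r * (4 * m / P) = 4 * m / r * (n / P) := by ring
      _ ≤ K * (1 / c) := by gcongr
      _ = K / c := by ring
  calc (n.choose r : ℝ) * (P.choose m * ((m : ℝ) / P) ^ (K * r))
      ≤ (Real.exp r * ((n : ℝ) / r) ^ r) * ((4 * m / P) ^ r * (1 / 2 : ℝ) ^ (K * r)) :=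
        mul_le_mul (choose_le_exp_mul_div_pow n r) (choose_mul_div_pow_le hmr hmP hrK)
          (by positivity) (by positivity)
    _ = (Real.exp 1 * (n / r * (4 * m / P)) * (1 / 2 : ℝ) ^ K) ^ r := by
        rw [← Real.exp_one_pow, pow_mul, mul_pow, mul_pow, mul_pow]
        ring
    _ ≤ (Real.exp 1 * (K / c) * (1 / 2 : ℝ) ^ K) ^ r := by gcongr

lemma choose_mul_exp_neg_le {n r : ℕ} {b y : ℝ} (hr : (n : ℝ) ≤ r * Real.exp b)
    (hy : r * (2 + b) ≤ y) : (n.choose r : ℝ) * Real.exp (-y) ≤ Real.exp (-r) := by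
  have hnr : (n : ℝ) / r ≤ Real.exp b :=
    div_le_of_le_mul₀ (by positivity) (Real.exp_nonneg _) (by rwa [mul_comm])
  calc (n.choose r : ℝ) * Real.exp (-y)
      ≤ (Real.exp r * Real.exp b ^ r) * Real.exp (-(r * (2 + b))) := by
        gcongr
        exact (choose_le_exp_mul_div_pow n r).trans (by gcongr)
    _ = Real.exp (-r) := by
        rw [← Real.exp_nat_mul, ← Real.exp_add, ← Real.exp_add]
        ring_nf

lemma choose_mul_exp_neg_le_of_two_mul_le {n r : ℕ} {y : ℝ} (hr : r ≤ n) (hy : 2 * n ≤ y) :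
    (n.choose r : ℝ) * Real.exp (-y) ≤ Real.exp (-r) := by
  calc (n.choose r : ℝ) * Real.exp (-y) ≤ Real.exp n * Real.exp (-(2 * n)) := by
        gcongr
        calc (n.choose r : ℝ) ≤ 2 ^ n := by exact_mod_cast Nat.choose_le_two_pow n r
          _ ≤ Real.exp 1 ^ n := by
              gcongr
              linarith [Real.add_one_le_exp (1 : ℝ)]
          _ = Real.exp n := Real.exp_one_pow n
    _ = Real.exp (-n) := by
        rw [← Real.exp_add]
        ring_nf
    _ ≤ Real.exp (-r) := by gcongr

lemma mul_pow_le_factorial_mul_exp {x : ℝ} {r : ℕ} (hx : 1 ≤ x) (hr : 1 ≤ r) (j : ℕ) :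
    (r * x) ^ j ≤ j.factorial * Real.exp (r * (1 + j * Real.log x)) := by
  have hrpow : (r : ℝ) ^ j ≤ j.factorial * Real.exp r := by
    have := Real.pow_div_factorial_le_exp (r : ℝ) (by positivity) j
    rwa [div_le_iff₀' (by positivity)] at this
  have hxpow : x ^ j ≤ Real.exp (r * (j * Real.log x)) := by
    calc x ^ j = Real.exp (j * Real.log x) := by
          rw [Real.exp_nat_mul, Real.exp_log (by linarith)]
      _ ≤ Real.exp (r * (j * Real.log x)) := by
          have := Real.log_nonneg hx
          exact Real.exp_le_exp.2 (le_mul_of_one_le_left (by positivity) (by exact_mod_cast hr))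
  calc (r * x) ^ j ≤ (j.factorial * Real.exp r) * Real.exp (r * (j * Real.log x)) := by
        rw [mul_pow]
        gcongr
    _ = j.factorial * Real.exp (r * (1 + j * Real.log x)) := by
        rw [mul_assoc, ← Real.exp_add]
        ring_nf

lemma choose_mul_pow_mul_exp_le {n r j : ℕ} {y a : ℝ} (hn : 0 < n) (hr : 1 ≤ r)
    (hL : 1 ≤ Real.log n) (hlo : Real.log n + j * Real.log (Real.log n) + a ≤ y)
    (hhi : y ≤ 3 * Real.log n) (hy : 0 ≤ y) :
    (n.choose r : ℝ) * ((r * y) ^ j * Real.exp (-(r * y) + r))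
      ≤ 3 ^ j * j.factorial * Real.exp (2 - a) ^ r := by
  set L := Real.log n with hLdef
  have hchoose : (n.choose r : ℝ) ≤ Real.exp (r * L) := by
    calc (n.choose r : ℝ) ≤ (n : ℝ) ^ r := by exact_mod_cast Nat.choose_le_pow n r
      _ = Real.exp (r * L) := by
          rw [Real.exp_nat_mul, hLdef, Real.exp_log (by exact_mod_cast hn)]
  have hpow : (r * y) ^ j ≤ 3 ^ j * (j.factorial * Real.exp (r * (1 + j * Real.log L))) := by
    calc (r * y) ^ j ≤ (3 * (r * L)) ^ j := by
          rw [mul_left_comm]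
          gcongr
      _ ≤ 3 ^ j * (j.factorial * Real.exp (r * (1 + j * Real.log L))) := by
          rw [mul_pow]
          gcongr
          exact mul_pow_le_factorial_mul_exp hL hr j
  calc (n.choose r : ℝ) * ((r * y) ^ j * Real.exp (-(r * y) + r))
      ≤ Real.exp (r * L) * ((3 ^ j * (j.factorial * Real.exp (r * (1 + j * Real.log L)))) *
          Real.exp (-(r * (L + j * Real.log L + a)) + r)) := by gcongr
    _ = 3 ^ j * j.factorial * (Real.exp (r * L) * Real.exp (r * (1 + j * Real.log L)) *
          Real.exp (-(r * (L + j * Real.log L + a)) + r)) := by ring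
    _ = 3 ^ j * j.factorial * Real.exp (2 - a) ^ r := by
        rw [← Real.exp_nat_mul, ← Real.exp_add, ← Real.exp_add]
        ring_nf

lemma sum_range_pow_le {y : ℝ} (hy : 1 ≤ y) (k : ℕ) :
    ∑ j ∈ Finset.range k, y ^ j ≤ k * y ^ (k - 1) := by
  calc ∑ j ∈ Finset.range k, y ^ j ≤ (Finset.range k).card • y ^ (k - 1) :=
        Finset.sum_le_card_nsmul _ _ _ fun j hj =>
          pow_le_pow_right₀ hy (Nat.le_sub_one_of_lt (Finset.mem_range.1 hj))
    _ = k * y ^ (k - 1) := by simp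

lemma sum_Icc_one_pow_le {q : ℝ} (hq : 0 ≤ q) (hq2 : q ≤ 1 / 2) (N : ℕ) :
    ∑ r ∈ Finset.Icc 1 N, q ^ r ≤ 2 * q := by
  calc ∑ r ∈ Finset.Icc 1 N, q ^ r ≤ q ^ 1 / (1 - q) := geom_sum_Ico_le_of_lt_one hq (by linarith)
    _ ≤ 2 * q := by
        rw [pow_one, div_le_iff₀ (by linarith)]
        nlinarith

end Estimates

lemma expect_exp_card_keyUnion_le_of_overlap {n k P K : ℕ} [Nonempty (KeyRing P K)]
    {A : Finset (Fin n)} (hA : 1 ≤ A.card) (hAk : A.card + k ≤ n)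
    (hoverlap : (k + Real.exp (n * (K / P))) * (A.card * ((K : ℝ) ^ 2 / P)) ≤ 1) :
    𝔼 ω : Fin n → KeyRing P K, Real.exp (-((n - A.card - k) * (K / P) * (keyUnion ω A).card))
      ≤ Real.exp (-(A.card * (n * ((K : ℝ) ^ 2 / P))) + A.card) := by
  have hr : (1 : ℝ) ≤ A.card := by exact_mod_cast hA
  have hrk : (A.card : ℝ) + k ≤ n := by exact_mod_cast hAk
  set r : ℝ := (A.card : ℝ)
  set x : ℝ := (K : ℝ) ^ 2 / P with hx
  set θ : ℝ := (n - r - k) * (K / P) with hθ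
  have hθ0 : 0 ≤ θ := mul_nonneg (by linarith) (by positivity)
  have hθn : Real.exp θ ≤ Real.exp (n * (K / P)) := by
    refine Real.exp_le_exp.2 (mul_le_mul_of_nonneg_right ?_ (by positivity))
    linarith [(Nat.cast_nonneg k : (0 : ℝ) ≤ k)]
  have herror : (k + Real.exp θ * r) * x ≤ 1 := by
    calc (k + Real.exp θ * r) * x ≤ (k * r + Real.exp (n * (K / P)) * r) * x := by
          gcongr
          exact le_mul_of_one_le_right (Nat.cast_nonneg k) hr
      _ = (k + Real.exp (n * (K / P))) * (r * x) := by ring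
      _ ≤ 1 := hoverlap
  refine (expect_exp_card_keyUnion_le hθ0 A).trans (Real.exp_le_exp.2 ?_)
  calc -(θ * (r * K)) + (Real.exp θ - 1) * (K / P) * K * r ^ 2
      = -(r * (n * x)) + r * ((k + Real.exp θ * r) * x) := by
        rw [hθ, hx]
        ring
    _ ≤ -(r * (n * x)) + r * 1 := by gcongr
    _ = -(r * (n * x)) + r := by rw [mul_one]

section NearThreshold

variable {k n K P : ℕ} {c a : ℝ}

/-- The regime to which the theorem is reduced by truncating the key rings: the pool has at least
`c * n` keys, the expected number `n * (K ^ 2 / P)` of neighbours exceeds the threshold by `a` but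
is at most `3 * log n`, and `n`, `K` and `a` are large enough for the estimates below. -/
structure NearThreshold (k : ℕ) (c a : ℝ) (n K P : ℕ) : Prop where
  one_le : 1 ≤ k
  pos : 0 < c
  pool_ge : c * n ≤ P
  threshold_le : Real.log n + (k - 1 : ℕ) * Real.log (Real.log n) + a ≤ n * ((K : ℝ) ^ 2 / P)
  le_three_log : n * ((K : ℝ) ^ 2 / P) ≤ 3 * Real.log n
  excess_ge : 3 ≤ a
  six_mul_le : 6 * k ≤ n
  log_ge : 64 ≤ Real.log n
  three_log_le : 3 * Real.log n ≤ n
  ring_ge : 48 ≤ K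
  ring_decay : Real.exp 1 * (K / c) * (1 / 2 : ℝ) ^ K ≤ Real.exp (-1)
  overlap : (k + 1) * (3 * Real.log n) * Real.exp (√(3 * Real.log n / c) - Real.log n / 100) ≤ 1

namespace NearThreshold

lemma nodes_pos (h : NearThreshold k c a n K P) : 0 < n := by
  have := h.one_le
  have := h.six_mul_le
  lia

lemma pool_pos (h : NearThreshold k c a n K P) : 0 < P := by
  have := h.nodes_pos
  have := h.pos
  exact_mod_cast (by positivity : 0 < c * n).trans_le h.pool_ge

lemma ring_le_pool (h : NearThreshold k c a n K P) : K ≤ P := by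
  have hn : (0 : ℝ) < n := by exact_mod_cast h.nodes_pos
  have hP : (0 : ℝ) < P := by exact_mod_cast h.pool_pos
  have hsq : (K : ℝ) ^ 2 / P ≤ 1 :=
    le_of_mul_le_mul_left (by linarith [h.le_three_log, h.three_log_le]) hn
  rw [div_le_one hP] at hsq
  exact (Nat.le_self_pow two_ne_zero K).trans (by exact_mod_cast hsq)

lemma log_le_mul (h : NearThreshold k c a n K P) : Real.log n ≤ n * ((K : ℝ) ^ 2 / P) := by
  have := Real.log_nonneg (by linarith [h.log_ge] : 1 ≤ Real.log n)
  have : 0 ≤ (k - 1 : ℕ) * Real.log (Real.log n) := by positivity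
  linarith [h.threshold_le, h.excess_ge]

lemma mul_ring_div_pool_le (h : NearThreshold k c a n K P) :
    (n : ℝ) * (K / P) ≤ √(3 * Real.log n / c) := by
  have hP : (0 : ℝ) < P := by exact_mod_cast h.pool_pos
  have hpool : (n : ℝ) / P ≤ 1 / c := by
    rw [div_le_div_iff₀ hP h.pos]
    linarith [h.pool_ge]
  refine Real.le_sqrt_of_sq_le ?_
  have := h.log_ge
  calc ((n : ℝ) * (K / P)) ^ 2 = n * ((K : ℝ) ^ 2 / P) * (n / P) := by ring
    _ ≤ 3 * Real.log n * (1 / c) :=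
        mul_le_mul h.le_three_log hpool (by positivity) (by positivity)
    _ = 3 * Real.log n / c := by ring

lemma overlap_le_one (h : NearThreshold k c a n K P) {r : ℕ}
    (hr : r * Real.exp (Real.log n / 100) ≤ n) :
    (k + Real.exp (n * (K / P))) * (r * ((K : ℝ) ^ 2 / P)) ≤ 1 := by
  set L := Real.log n
  have : 0 ≤ L := by linarith [h.log_ge]
  have hdeg : 1 ≤ Real.exp (√(3 * L / c)) := Real.one_le_exp (Real.sqrt_nonneg _)
  have hsum : k + Real.exp (n * (K / P)) ≤ (k + 1) * Real.exp (√(3 * L / c)) := by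
    have := mul_le_mul_of_nonneg_left hdeg (Nat.cast_nonneg (α := ℝ) k)
    linarith [Real.exp_le_exp.2 h.mul_ring_div_pool_le]
  have hcard : r * ((K : ℝ) ^ 2 / P) ≤ 3 * L * Real.exp (-(L / 100)) := by
    calc r * ((K : ℝ) ^ 2 / P)
        = r * Real.exp (L / 100) * ((K : ℝ) ^ 2 / P) * Real.exp (-(L / 100)) := by
          rw [Real.exp_neg]
          field_simp
      _ ≤ n * ((K : ℝ) ^ 2 / P) * Real.exp (-(L / 100)) := by gcongr
      _ ≤ 3 * L * Real.exp (-(L / 100)) :=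
          mul_le_mul_of_nonneg_right h.le_three_log (Real.exp_nonneg _)
  calc (k + Real.exp (n * (K / P))) * (r * ((K : ℝ) ^ 2 / P))
      ≤ ((k + 1) * Real.exp (√(3 * L / c))) * (3 * L * Real.exp (-(L / 100))) := by gcongr
    _ = (k + 1) * (3 * L) * Real.exp (√(3 * L / c) - L / 100) := by
        rw [sub_eq_add_neg, Real.exp_add]
        ring
    _ ≤ 1 := h.overlap

lemma sum_range_mul_degree_pow_le (h : NearThreshold k c a n K P) {r : ℕ} (hr : 1 ≤ r) :
    ∑ j ∈ Finset.range k, (r * (n * ((K : ℝ) ^ 2 / P))) ^ j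
      ≤ k * (r * (n * ((K : ℝ) ^ 2 / P))) ^ (k - 1) := by
  have hr : (1 : ℝ) ≤ r := by exact_mod_cast hr
  exact sum_range_pow_le (one_le_mul_of_one_le_of_one_le hr
    (by linarith [h.log_le_mul, h.log_ge])) k

lemma choose_mul_uniformProb_le_of_small (h : NearThreshold k c a n K P) {A : Finset (Fin n)}
    (hA : 1 ≤ A.card) (hAn : A.card ≤ n / 2) (hsmall : A.card * Real.exp (Real.log n / 100) ≤ n) :
    n.choose A.card *
        uniformProb (fun ω : Fin n → KeyRing P K => (outerBoundary (rkgGraph ω) A).card < k)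
      ≤ k * (3 ^ (k - 1) * (k - 1).factorial * Real.exp (2 - a) ^ A.card) := by
  have := nonempty_keyRing h.ring_le_pool
  have hAk : A.card + k ≤ n := by
    have := h.six_mul_le
    lia
  set y : ℝ := n * ((K : ℝ) ^ 2 / P)
  calc n.choose A.card *
        uniformProb (fun ω : Fin n → KeyRing P K => (outerBoundary (rkgGraph ω) A).card < k)
      ≤ n.choose A.card * ((k * (A.card * y) ^ (k - 1)) *
          Real.exp (-(A.card * y) + A.card)) := by
        gcongr
        exact (uniformProb_card_outerBoundary_lt_le A k).trans (mul_le_mul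
          (h.sum_range_mul_degree_pow_le hA)
          (expect_exp_card_keyUnion_le_of_overlap hA hAk (h.overlap_le_one hsmall))
          (Finset.expect_nonneg fun _ _ => Real.exp_nonneg _) (by positivity))
    _ = k * (n.choose A.card * ((A.card * y) ^ (k - 1) *
          Real.exp (-(A.card * y) + A.card))) := by ring
    _ ≤ k * (3 ^ (k - 1) * (k - 1).factorial * Real.exp (2 - a) ^ A.card) := by
        exact mul_le_mul_of_nonneg_left (choose_mul_pow_mul_exp_le h.nodes_pos hA
          (by linarith [h.log_ge]) h.threshold_le h.le_three_log (by positivity))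
          (Nat.cast_nonneg k)

lemma choose_mul_exp_le_of_large (h : NearThreshold k c a n K P) {r : ℕ} (hr : 1 ≤ r)
    (hrn : r ≤ n / 2) (hlarge : n ≤ r * Real.exp (Real.log n / 100)) :
    n.choose r * Real.exp (-((n - r - k) * (K / P) * (min (K * r) P / 4 : ℕ)))
      ≤ Real.exp (-r) := by
  have hP : (0 : ℝ) < P := by exact_mod_cast h.pool_pos
  have hK : (48 : ℝ) ≤ K := by exact_mod_cast h.ring_ge
  have hthird : (n : ℝ) / 3 ≤ n - r - k := by
    have hk : (6 : ℝ) * k ≤ n := by exact_mod_cast h.six_mul_le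
    have hr2 : (2 : ℝ) * r ≤ n := by exact_mod_cast (by lia : 2 * r ≤ n)
    linarith
  have hfloor : (min (K * r) P : ℕ) / 8 ≤ ((min (K * r) P / 4 : ℕ) : ℝ) := by
    have hKr := Nat.mul_le_mul h.ring_ge hr
    have hKP := h.ring_ge.trans h.ring_le_pool
    rw [div_le_iff₀ (by norm_num)]
    exact_mod_cast (by lia : min (K * r) P ≤ min (K * r) P / 4 * 8)
  have hθ : 0 ≤ (n - r - k) * ((K : ℝ) / P) :=
    mul_nonneg (le_trans (by positivity) hthird) (by positivity)
  have hexponent : (n : ℝ) / 3 * (K / P) * ((min (K * r) P : ℕ) / 8)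
      ≤ (n - r - k) * (K / P) * (min (K * r) P / 4 : ℕ) := by
    gcongr
  rcases le_total (K * r) P with hle | hle
  · rw [min_eq_left hle] at hexponent ⊢
    refine choose_mul_exp_neg_le hlarge (le_trans ?_ hexponent)
    calc r * (2 + Real.log n / 100) ≤ r * (Real.log n / 24) := by
          gcongr
          linarith [h.log_ge]
      _ ≤ r * (n * ((K : ℝ) ^ 2 / P) / 24) := by
          gcongr
          exact h.log_le_mul
      _ = (n : ℝ) / 3 * (K / P) * ((K * r : ℕ) / 8) := by
          push_cast
          ring
  · rw [min_eq_right hle] at hexponent ⊢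
    refine choose_mul_exp_neg_le_of_two_mul_le (by lia) (le_trans ?_ hexponent)
    calc 2 * (n : ℝ) ≤ K / 24 * n := by
          gcongr
          linarith
      _ = (n : ℝ) / 3 * (K / P) * (P / 8) := by
          field_simp
          ring

lemma choose_mul_expect_le_of_large (h : NearThreshold k c a n K P) {A : Finset (Fin n)}
    (hA : 1 ≤ A.card) (hAn : A.card ≤ n / 2)
    (hlarge : n ≤ A.card * Real.exp (Real.log n / 100)) :
    n.choose A.card * 𝔼 ω : Fin n → KeyRing P K,
        Real.exp (-((n - A.card - k) * (K / P) * (keyUnion ω A).card))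
      ≤ 2 * Real.exp (-A.card) := by
  have := nonempty_keyRing h.ring_le_pool
  have hθ : (0 : ℝ) ≤ (n - A.card - k) * (K / P) := by
    have hAk : ((A.card + k : ℕ) : ℝ) ≤ n := by
      have := h.six_mul_le
      exact_mod_cast (by lia)
    push_cast at hAk
    exact mul_nonneg (by linarith) (by positivity)
  set m : ℕ := min (K * A.card) P / 4
  have hmany := h.choose_mul_exp_le_of_large hA hAn hlarge
  have hfew : (n.choose A.card : ℝ) * (P.choose m * ((m : ℝ) / P) ^ (K * A.card))
      ≤ Real.exp (-A.card) := by
    calc (n.choose A.card : ℝ) * (P.choose m * ((m : ℝ) / P) ^ (K * A.card))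
        ≤ (Real.exp 1 * (K / c) * (1 / 2 : ℝ) ^ K) ^ A.card :=
          choose_mul_choose_mul_div_pow_le h.pos h.pool_ge (by have := h.ring_ge; lia) (by lia)
            (by lia)
      _ ≤ Real.exp (-1) ^ A.card := by
          have := h.pos
          exact pow_le_pow_left₀ (by positivity) h.ring_decay _
      _ = Real.exp (-A.card) := by
          rw [← Real.exp_nat_mul]
          ring_nf
  calc n.choose A.card * 𝔼 ω : Fin n → KeyRing P K,
        Real.exp (-((n - A.card - k) * (K / P) * (keyUnion ω A).card))
      ≤ n.choose A.card * (Real.exp (-((n - A.card - k) * (K / P) * m)) +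
          P.choose m * ((m : ℝ) / P) ^ (K * A.card)) := by
        gcongr
        exact expect_exp_card_keyUnion_le_add hθ A (by lia)
    _ ≤ 2 * Real.exp (-A.card) := by linarith

lemma choose_mul_uniformProb_le_of_large (h : NearThreshold k c a n K P) {A : Finset (Fin n)}
    (hA : 1 ≤ A.card) (hAn : A.card ≤ n / 2)
    (hlarge : n ≤ A.card * Real.exp (Real.log n / 100)) :
    n.choose A.card *
        uniformProb (fun ω : Fin n → KeyRing P K => (outerBoundary (rkgGraph ω) A).card < k)
      ≤ 2 * k * (n : ℝ) ^ (2 * k) * Real.exp (-√n) := by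
  have := nonempty_keyRing h.ring_le_pool
  have hn : (1 : ℝ) ≤ n := by exact_mod_cast h.nodes_pos
  have hpow : (A.card * (n * ((K : ℝ) ^ 2 / P))) ^ (k - 1) ≤ (n : ℝ) ^ (2 * k) := by
    calc (A.card * (n * ((K : ℝ) ^ 2 / P))) ^ (k - 1) ≤ ((n : ℝ) * n) ^ (k - 1) := by
          gcongr
          · lia
          · exact h.le_three_log.trans h.three_log_le
      _ = (n : ℝ) ^ (2 * (k - 1)) := by rw [← pow_two, pow_mul]
      _ ≤ (n : ℝ) ^ (2 * k) := pow_le_pow_right₀ hn (by lia)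
  have hsqrt : √n ≤ A.card := by
    have hexp : Real.exp (Real.log n / 100) ≤ √n := by
      rw [← Real.exp_log (by positivity : 0 < √(n : ℝ)), Real.log_sqrt (by positivity)]
      exact Real.exp_le_exp.2 (by linarith [h.log_ge])
    have : √(n : ℝ) * √n ≤ A.card * √n := by
      rw [Real.mul_self_sqrt (by positivity)]
      exact hlarge.trans (by gcongr)
    exact le_of_mul_le_mul_right this (by positivity)
  set S : ℝ := ∑ j ∈ Finset.range k, (A.card * (n * ((K : ℝ) ^ 2 / P))) ^ j
  set E : ℝ := 𝔼 ω : Fin n → KeyRing P K,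
    Real.exp (-((n - A.card - k) * (K / P) * (keyUnion ω A).card))
  calc n.choose A.card *
        uniformProb (fun ω : Fin n → KeyRing P K => (outerBoundary (rkgGraph ω) A).card < k)
      ≤ n.choose A.card * (S * E) := by
        gcongr
        exact uniformProb_card_outerBoundary_lt_le A k
    _ = S * (n.choose A.card * E) := by ring
    _ ≤ (k * (n : ℝ) ^ (2 * k)) * (2 * Real.exp (-√n)) :=
        mul_le_mul ((h.sum_range_mul_degree_pow_le hA).trans (by gcongr))
          ((h.choose_mul_expect_le_of_large hA hAn hlarge).trans (by gcongr))
          (mul_nonneg (Nat.cast_nonneg _) (Finset.expect_nonneg fun _ _ => Real.exp_nonneg _))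
          (by positivity)
    _ = 2 * k * (n : ℝ) ^ (2 * k) * Real.exp (-√n) := by ring

lemma uniformProb_not_kConnected_le (h : NearThreshold k c a n K P) :
    uniformProb (fun ω : Fin n → KeyRing P K => ¬ KConnected (rkgGraph ω) k)
      ≤ 2 * k * 3 ^ (k - 1) * (k - 1).factorial * Real.exp (2 - a)
        + 2 * k * (n : ℝ) ^ (2 * k + 1) * Real.exp (-√n) := by
  set C : ℝ := k * (3 ^ (k - 1) * (k - 1).factorial) with hC
  set D : ℝ := 2 * k * (n : ℝ) ^ (2 * k) * Real.exp (-√n) with hD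
  have hq : Real.exp (2 - a) ≤ 1 / 2 := by
    calc Real.exp (2 - a) ≤ Real.exp (-1) := Real.exp_le_exp.2 (by linarith [h.excess_ge])
      _ ≤ 1 / 2 := by linarith [Real.exp_neg_one_lt_d9]
  calc uniformProb (fun ω : Fin n → KeyRing P K => ¬ KConnected (rkgGraph ω) k)
      ≤ ∑ r ∈ Finset.Icc 1 (n / 2), (C * Real.exp (2 - a) ^ r + D) := by
        refine uniformProb_not_kConnected_le_sum h.one_le (by have := h.six_mul_le; lia) _
          fun A hA hAn => ?_
        rcases le_total (A.card * Real.exp (Real.log n / 100)) n with hcard | hcard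
        · have := h.choose_mul_uniformProb_le_of_small hA hAn hcard
          rw [← mul_assoc] at this
          exact this.trans (le_add_of_nonneg_right (by positivity))
        · exact (h.choose_mul_uniformProb_le_of_large hA hAn hcard).trans
            (le_add_of_nonneg_left (by positivity))
    _ = C * ∑ r ∈ Finset.Icc 1 (n / 2), Real.exp (2 - a) ^ r + (n / 2 : ℕ) * D := by
        simp [Finset.sum_add_distrib, Finset.mul_sum]
    _ ≤ C * (2 * Real.exp (2 - a)) + n * D := by
        gcongr
        · exact sum_Icc_one_pow_le (Real.exp_nonneg _) hq _
        · exact Nat.div_le_self n 2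
    _ = 2 * k * 3 ^ (k - 1) * (k - 1).factorial * Real.exp (2 - a)
        + 2 * k * (n : ℝ) ^ (2 * k + 1) * Real.exp (-√n) := by
        rw [hC, hD]
        ring

end NearThreshold

end NearThreshold

section Truncation

variable {n K P : ℕ}

/-- The key ring size `K` cut down to make the expected degree at most `3 * log n`. -/
def truncatedRing (n K P : ℕ) : ℕ :=
  min K ⌊√(3 * Real.log n * P / n)⌋₊

lemma truncatedRing_le : truncatedRing n K P ≤ K :=
  min_le_left _ _

lemma two_thirds_mul_le_floor_sqrt_sq {y : ℝ} (hy : 36 ≤ y) :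
    2 / 3 * y ≤ (⌊√y⌋₊ : ℝ) ^ 2 := by
  have hroot : 6 ≤ √y := Real.le_sqrt_of_sq_le (by linarith)
  have hfloor : √y - 1 < ⌊√y⌋₊ := Nat.sub_one_lt_floor _
  have hsq : √y ^ 2 = y := Real.sq_sqrt (by linarith)
  nlinarith

lemma mul_truncatedRing_le (hn : 0 < n) (hP : 0 < P) :
    n * ((truncatedRing n K P : ℝ) ^ 2 / P) ≤ 3 * Real.log n := by
  set y : ℝ := 3 * Real.log n * P / n with hy
  have hsq : (truncatedRing n K P : ℝ) ^ 2 ≤ y := by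
    calc (truncatedRing n K P : ℝ) ^ 2 ≤ √y ^ 2 := by
          gcongr
          exact le_trans (by exact_mod_cast min_le_right _ _) (Nat.floor_le (Real.sqrt_nonneg _))
      _ = y := Real.sq_sqrt (by positivity)
  calc n * ((truncatedRing n K P : ℝ) ^ 2 / P) ≤ n * (y / P) := by gcongr
    _ = 3 * Real.log n := by
        rw [hy]
        field_simp

lemma le_mul_truncatedRing {t : ℝ} (hn : 0 < n) (hP : 0 < P)
    (hlarge : 12 * (n : ℝ) ≤ Real.log n * P) (ht : t ≤ 2 * Real.log n)
    (htK : t ≤ n * ((K : ℝ) ^ 2 / P)) : t ≤ n * ((truncatedRing n K P : ℝ) ^ 2 / P) := by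
  have hn : (0 : ℝ) < n := by exact_mod_cast hn
  set y : ℝ := 3 * Real.log n * P / n with hy
  have hy36 : 36 ≤ y := by
    rw [hy, le_div_iff₀ hn]
    linarith
  rcases le_total K ⌊√y⌋₊ with hle | hle
  · rwa [truncatedRing, min_eq_left hle]
  · rw [truncatedRing, min_eq_right hle]
    calc t ≤ 2 * Real.log n := ht
      _ = n * (2 / 3 * y / P) := by
          rw [hy]
          field_simp
      _ ≤ n * ((⌊√y⌋₊ : ℝ) ^ 2 / P) := by
          gcongr
          exact two_thirds_mul_le_floor_sqrt_sq hy36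

end Truncation

section Asymptotics

lemma tendsto_log_natCast_atTop : Tendsto (fun n : ℕ => Real.log n) atTop atTop :=
  Real.tendsto_log_atTop.comp tendsto_natCast_atTop_atTop

lemma tendsto_sub_mul_log_atTop (b : ℝ) :
    Tendsto (fun x : ℝ => x - b * Real.log x) atTop atTop := by
  have hlog : (fun x : ℝ => b * Real.log x) =o[atTop] fun x : ℝ => x :=
    Real.isLittleO_log_id_atTop.const_mul_left b
  exact (IsEquivalent.refl.sub_isLittleO hlog).symm.tendsto_atTop tendsto_id

lemma tendsto_pow_mul_exp_neg_sqrt (m : ℕ) :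
    Tendsto (fun x : ℝ => x ^ m * Real.exp (-√x)) atTop (nhds 0) := by
  refine ((Real.tendsto_pow_mul_exp_neg_atTop_nhds_zero (2 * m)).comp
    Real.tendsto_sqrt_atTop).congr' ?_
  filter_upwards [eventually_ge_atTop 0] with x hx
  simp only [Function.comp_apply, pow_mul, Real.sq_sqrt hx]

lemma eventually_mul_exp_sqrt_sub_le_one {c : ℝ} (hc : 0 < c) (b : ℝ) :
    ∀ᶠ x : ℝ in atTop, b * (3 * x) * Real.exp (√(3 * x / c) - x / 100) ≤ 1 := by
  have htendsto : Tendsto (fun x : ℝ => 600 * |b| * (x / 200 * Real.exp (-(x / 200)))) atTop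
      (nhds 0) := by
    simpa using ((Real.tendsto_pow_mul_exp_neg_atTop_nhds_zero 1).comp
      (tendsto_id.atTop_div_const (by norm_num : (0 : ℝ) < 200))).const_mul (600 * |b|)
  filter_upwards [htendsto.eventually_le_const zero_lt_one, eventually_ge_atTop 0,
    eventually_ge_atTop (120000 / c)] with x hx hx0 hxc
  have hsqrt : √(3 * x / c) ≤ x / 200 := by
    refine Real.sqrt_le_iff.2 ⟨by positivity, ?_⟩
    rw [div_le_iff₀ hc] at hxc ⊢
    nlinarith
  calc b * (3 * x) * Real.exp (√(3 * x / c) - x / 100)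
      ≤ |b| * (3 * x) * Real.exp (-(x / 200)) := by
        gcongr
        · exact le_abs_self b
        · linarith
    _ = 600 * |b| * (x / 200 * Real.exp (-(x / 200))) := by ring
    _ ≤ 1 := hx

lemma eventually_mul_half_pow_le {b ε : ℝ} (hε : 0 < ε) :
    ∀ᶠ m : ℕ in atTop, b * m * (1 / 2 : ℝ) ^ m ≤ ε := by
  have htendsto := (tendsto_self_mul_const_pow_of_lt_one (r := (1 / 2 : ℝ)) (by norm_num)
    (by norm_num)).const_mul b
  rw [mul_zero] at htendsto
  simpa only [mul_assoc] using htendsto.eventually_le_const hε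

variable {K P : ℕ → ℕ} {c : ℝ} {k : ℕ}

lemma tendsto_ring_atTop (hc : 0 < c) (hpool : ∀ᶠ n : ℕ in atTop, c * n ≤ P n)
    (hlog : ∀ᶠ n : ℕ in atTop, Real.log n ≤ n * ((K n : ℝ) ^ 2 / P n)) :
    Tendsto K atTop atTop := by
  rw [← tendsto_natCast_atTop_iff (R := ℝ)]
  refine tendsto_atTop_mono' _ ?_
    (Real.tendsto_sqrt_atTop.comp (tendsto_log_natCast_atTop.const_mul_atTop hc))
  filter_upwards [hlog, hpool, eventually_gt_atTop 0] with n hlogn hpooln hn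
  have hn : (0 : ℝ) < n := by exact_mod_cast hn
  have hP : (0 : ℝ) < P n := (by positivity : 0 < c * n).trans_le hpooln
  refine Real.sqrt_le_iff.2 ⟨Nat.cast_nonneg _, le_of_mul_le_mul_left ?_ hn⟩
  calc n * (c * Real.log n) = c * n * Real.log n := by ring
    _ ≤ P n * (n * ((K n : ℝ) ^ 2 / P n)) := by gcongr
    _ = n * (K n : ℝ) ^ 2 := by field_simp

lemma eventually_truncatedRing_bounds (hc : 0 < c) (hpool : ∀ᶠ n : ℕ in atTop, c * n ≤ P n)
    {t : ℕ → ℝ} (ht : ∀ᶠ n : ℕ in atTop, t n ≤ 2 * Real.log n ∧ t n ≤ n * ((K n : ℝ) ^ 2 / P n)) :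
    ∀ᶠ n : ℕ in atTop, t n ≤ n * ((truncatedRing n (K n) (P n) : ℝ) ^ 2 / P n) ∧
      n * ((truncatedRing n (K n) (P n) : ℝ) ^ 2 / P n) ≤ 3 * Real.log n := by
  filter_upwards [hpool, ht, tendsto_log_natCast_atTop.eventually_ge_atTop (12 / c),
    eventually_gt_atTop 0] with n hpooln htn hlog hn
  have hP : 0 < P n := by
    exact_mod_cast (by positivity : 0 < c * n).trans_le hpooln
  have hlarge : 12 * (n : ℝ) ≤ Real.log n * P n := by
    calc 12 * (n : ℝ) = 12 / c * (c * n) := by field_simp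
      _ ≤ Real.log n * P n := by gcongr
  exact ⟨le_mul_truncatedRing hn hP hlarge htn.1 htn.2, mul_truncatedRing_le hn hP⟩

lemma eventually_nearThreshold_truncatedRing (hk : 1 ≤ k) (hc : 0 < c)
    (hpool : ∀ᶠ n : ℕ in atTop, c * n ≤ P n) {a : ℕ → ℝ} (ha : Tendsto a atTop atTop)
    (hthreshold : ∀ᶠ n : ℕ in atTop,
      Real.log n + (k - 1 : ℕ) * Real.log (Real.log n) + a n ≤ 2 * Real.log n ∧
      Real.log n + (k - 1 : ℕ) * Real.log (Real.log n) + a n ≤ n * ((K n : ℝ) ^ 2 / P n)) :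
    ∀ᶠ n : ℕ in atTop,
      NearThreshold k c (a n) n (truncatedRing n (K n) (P n)) (P n) := by
  have hlog := tendsto_log_natCast_atTop
  have hbounds := eventually_truncatedRing_bounds hc hpool hthreshold
  have hring : Tendsto (fun n => truncatedRing n (K n) (P n)) atTop atTop := by
    refine tendsto_ring_atTop hc hpool ?_
    filter_upwards [hbounds, ha.eventually_ge_atTop 0, hlog.eventually_ge_atTop 1]
      with n hn han hlogn
    have : 0 ≤ (k - 1 : ℕ) * Real.log (Real.log n) :=
      mul_nonneg (Nat.cast_nonneg _) (Real.log_nonneg hlogn)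
    linarith [hn.1]
  filter_upwards [hpool, hbounds, ha.eventually_ge_atTop 3, eventually_ge_atTop (6 * k),
    hlog.eventually_ge_atTop 64, ((tendsto_sub_mul_log_atTop 3).comp
      tendsto_natCast_atTop_atTop).eventually_ge_atTop 0, hring.eventually_ge_atTop 48,
    hring.eventually (eventually_mul_half_pow_le (b := Real.exp 1 / c) (Real.exp_pos (-1))),
    hlog.eventually (eventually_mul_exp_sqrt_sub_le_one hc (k + 1))]
    with n hpooln hn han hkn hlogn hlin hringn hdecay hoverlap
  exact
    { one_le := hk
      pos := hc
      pool_ge := hpooln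
      threshold_le := hn.1
      le_three_log := hn.2
      excess_ge := han
      six_mul_le := hkn
      log_ge := hlogn
      three_log_le := sub_nonneg.1 hlin
      ring_ge := hringn
      ring_decay := by rwa [← mul_div_right_comm, mul_div_assoc] at hdecay
      overlap := hoverlap }

lemma tendsto_uniformProb_kConnected_of_nearThreshold {a : ℕ → ℝ}
    (ha : Tendsto a atTop atTop)
    (h : ∀ᶠ n : ℕ in atTop, NearThreshold k c (a n) n (K n) (P n)) :
    Tendsto (fun n => uniformProb fun ω : Fin n → KeyRing (P n) (K n) =>
      KConnected (rkgGraph ω) k) atTop (nhds 1) := by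
  have hexp : Tendsto (fun n => Real.exp (2 - a n)) atTop (nhds 0) :=
    Real.tendsto_exp_atBot.comp (tendsto_const_nhds.add_atBot (tendsto_neg_atTop_atBot.comp ha))
  have hsqrt : Tendsto (fun n : ℕ => (n : ℝ) ^ (2 * k + 1) * Real.exp (-√n)) atTop (nhds 0) :=
    (tendsto_pow_mul_exp_neg_sqrt _).comp tendsto_natCast_atTop_atTop
  have hbound := ((hexp.const_mul (2 * k * 3 ^ (k - 1) * (k - 1).factorial : ℝ)).add
    (hsqrt.const_mul (2 * k : ℝ))).const_sub 1
  simp only [mul_zero, add_zero, sub_zero, ← mul_assoc] at hbound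
  refine tendsto_of_tendsto_of_tendsto_of_le_of_le' hbound tendsto_const_nhds ?_ ?_ <;>
    filter_upwards [h] with n hn <;> have := nonempty_keyRing hn.ring_le_pool
  · linarith [hn.uniformProb_not_kConnected_le,
      uniformProb_not fun ω : Fin n → KeyRing (P n) (K n) => KConnected (rkgGraph ω) k]
  · exact uniformProb_le_one _

/-- The excess over the threshold, capped at the excess of an expected degree of `2 * log n`. -/
def cappedExcess (k : ℕ) (α : ℕ → ℝ) (n : ℕ) : ℝ :=
  min (α n) (Real.log n - (k - 1 : ℕ) * Real.log (Real.log n))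

lemma tendsto_cappedExcess_atTop {α : ℕ → ℝ} (hα : Tendsto α atTop atTop) :
    Tendsto (cappedExcess k α) atTop atTop :=
  tendsto_atTop.2 fun b => ((tendsto_atTop.1 hα b).and
    (tendsto_atTop.1 ((tendsto_sub_mul_log_atTop _).comp tendsto_log_natCast_atTop) b)).mono
      fun _ h => le_min h.1 h.2

lemma add_cappedExcess_le {n : ℕ} {α : ℕ → ℝ} (hk : 1 ≤ k) (hn : 1 ≤ n)
    (hα : (K n : ℝ) ^ 2 / P n =
      (Real.log n + ((k : ℝ) - 1) * Real.log (Real.log n) + α n) / n) :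
    Real.log n + (k - 1 : ℕ) * Real.log (Real.log n) + cappedExcess k α n ≤ 2 * Real.log n ∧
      Real.log n + (k - 1 : ℕ) * Real.log (Real.log n) + cappedExcess k α n
        ≤ n * ((K n : ℝ) ^ 2 / P n) := by
  constructor
  · rw [cappedExcess]
    linarith [min_le_right (α n) (Real.log n - (k - 1 : ℕ) * Real.log (Real.log n))]
  · rw [hα, mul_div_cancel₀ _ (by positivity), ← Nat.cast_pred hk]
    gcongr
    exact min_le_left _ _

end Asymptotics

/-- one-law for `k`-connectivity in random key graphs. -/
theorem rkg_one_law
    (k : ℕ) (hk : 1 ≤ k) (K P : ℕ → ℕ)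
    (hKP : ∀ n, K n ≤ P n)
    (hK2 : ∀ᶠ n : ℕ in atTop, 2 ≤ K n)
    (hP : ∃ c : ℝ, 0 < c ∧ ∀ᶠ n : ℕ in atTop, c * (n : ℝ) ≤ (P n : ℝ))
    (α : ℕ → ℝ)
    (hα : ∀ n, 1 ≤ n → (K n : ℝ) ^ 2 / (P n : ℝ) =
      (Real.log n + ((k : ℝ) - 1) * Real.log (Real.log n) + α n) / (n : ℝ))
    (hαtop : Tendsto α atTop atTop) :
    Tendsto (fun n : ℕ => rkgMeasure n (K n) (P n)
        {ω | KConnected (rkgGraph ω) k}) atTop (nhds 1) := by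
  obtain ⟨c, hc, hpool⟩ := hP
  have hexcess : Tendsto (cappedExcess k α) atTop atTop := tendsto_cappedExcess_atTop hαtop
  have hnear : ∀ᶠ n in atTop,
      NearThreshold k c (cappedExcess k α n) n (truncatedRing n (K n) (P n)) (P n) := by
    refine eventually_nearThreshold_truncatedRing hk hc hpool hexcess ?_
    filter_upwards [eventually_ge_atTop 1] with n hn using add_cappedExcess_le hk hn (hα n hn)
  have hprob : Tendsto (fun n => uniformProb fun ω : Fin n → KeyRing (P n) (K n) =>
      KConnected (rkgGraph ω) k) atTop (nhds 1) := by
    refine tendsto_of_tendsto_of_tendsto_of_le_of_le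
      (tendsto_uniformProb_kConnected_of_nearThreshold hexcess hnear) tendsto_const_nhds
      (fun n => uniformProb_rkgGraph_mono monotone_kConnected truncatedRing_le (hKP n)) fun n => ?_
    have := nonempty_keyRing (hKP n)
    exact uniformProb_le_one _
  simpa only [rkgMeasure_setOf (hKP _), ENNReal.ofReal_one] using ENNReal.tendsto_ofReal hprob
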